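/- arXiv:2011.03887 — 3 statements merged into one kernel-verified Lean document; each statement's English description precedes it below -/
import Mathlib

section
/- Let λ be a nonzero integer, let f(X) = X²(X−λ) ∈ ℤ[X], and let R = ℤ[X]/(f). Then the Dirichlet series Z(s) = Σ_{k≥1} a_R(k) k^{−s} converges for Re(s) > 1, and there exist δ > 0 and a function g holomorphic on {s ∈ ℂ : Re(s) > 1 − δ} with g(1) ≠ 0 such that Z(s) = g(s)·(s−1)^{−3} for all s with Re(s) > 1; that is, Z has a pole of order 3 at s = 1. -/
/-- `idealCount R k` is the number of ideals `I` of `R` such that `R ⧸ I` is finite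
with exactly `k` elements. -/
noncomputable def idealCount (R : Type) [CommRing R] (k : ℕ) : ℕ :=
  Set.ncard {I : Ideal R | Nat.card (R ⧸ I) = k}

/-- positive natural -/
def tp (n : ℕ) (h : 0 < n) : ℕ+ := ⟨n, h⟩

@[simp] lemma tp_coe (n : ℕ) (h : 0 < n) : ((tp n h : ℕ+) : ℕ) = n := rfl

open ArithmeticFunction in
/-- Möbius transform of `n ↦ n ^ z`. -/
noncomputable def hz (z : ℂ) (e : ℕ) : ℂ :=
  ∑ x ∈ e.divisorsAntidiagonal, (moebius x.1 : ℂ) * (x.2 : ℂ) ^ z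

lemma sum_hz (z : ℂ) (n : ℕ) (hn : 0 < n) : ∑ i ∈ n.divisors, hz z i = (n : ℂ) ^ z :=
  (ArithmeticFunction.sum_eq_iff_sum_mul_moebius_eq (f := hz z) (g := fun n => (n : ℂ) ^ z)).2
    (fun _ _ => rfl) n hn

lemma hz_zero (n : ℕ) (hn : 0 < n) : hz 0 n = if n = 1 then 1 else 0 := by
  refine (ArithmeticFunction.sum_eq_iff_sum_mul_moebius_eq (f := fun n => if n = 1 then (1:ℂ) else 0)
    (g := fun n => (n : ℂ) ^ (0:ℂ))).1 ?_ n hn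
  intro n hn
  simp [Finset.sum_ite_eq', hn.ne']

lemma differentiable_hz (e : ℕ) (u : ℂ → ℂ) (hu : Differentiable ℂ u) :
    Differentiable ℂ (fun s => hz (u s) e) := by
  unfold hz
  refine Differentiable.fun_sum fun x hx => ?_
  have : x.2 ≠ 0 := by
    have := Nat.mem_divisorsAntidiagonal.1 hx
    rintro h; simp [h] at this; omega
  refine (differentiable_const _).mul ?_
  exact hu.const_cpow (Or.inl (by exact_mod_cast this))

/-- The correction factor. -/
noncomputable def corr (lam : ℤ) (s : ℂ) : ℂ :=
  ∑ e ∈ lam.natAbs.divisors, hz (2 - 2 * s) e * (e : ℂ) ^ (-s)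

lemma differentiable_corr (lam : ℤ) : Differentiable ℂ (corr lam) := by
  unfold corr
  refine Differentiable.fun_sum fun e he => ?_
  have : e ≠ 0 := (Nat.pos_of_mem_divisors he).ne'
  refine (differentiable_hz e _ (by fun_prop)).mul ?_
  exact differentiable_id.neg.const_cpow (Or.inl (by exact_mod_cast this))

lemma corr_one (lam : ℤ) (hlam : lam ≠ 0) : corr lam 1 = 1 := by
  unfold corr
  rw [Finset.sum_eq_single 1]
  · norm_num [hz_zero]
  · intro e he h1
    norm_num [hz_zero e (Nat.pos_of_mem_divisors he), h1]
  · simp [hlam]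

/-- `(s - 1) ζ(s)`, entire. -/
noncomputable def xz : ℂ → ℂ := Function.update (fun s => (s - 1) * riemannZeta s) 1 1

lemma differentiable_xz : Differentiable ℂ xz := by
  rw [← differentiableOn_univ,
    ← Complex.differentiableOn_compl_singleton_and_continuousAt_iff (c := 1) Filter.univ_mem]
  constructor
  · intro s hs
    have hs1 : s ≠ 1 := by simpa using hs
    refine DifferentiableAt.differentiableWithinAt ?_
    have : DifferentiableAt ℂ (fun s => (s - 1) * riemannZeta s) s :=
      (by fun_prop : DifferentiableAt ℂ (fun s : ℂ => s - 1) s).mul (differentiableAt_riemannZeta hs1)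
    refine this.congr_of_eventuallyEq ?_
    filter_upwards [isOpen_ne.mem_nhds hs1] with t ht
    simp [xz, Function.update_of_ne ht]
  · exact continuousAt_update_same.2 riemannZeta_residue_one

lemma hasSum_zeta (s : ℂ) (hs : 1 < s.re) :
    HasSum (fun c : ℕ+ => 1 / (c : ℂ) ^ s) (riemannZeta s) := by
  have h0 : s ≠ 0 := by rintro rfl; norm_num at hs
  have h : HasSum (fun n : ℕ => 1 / (n : ℂ) ^ s) (riemannZeta s) := by
    rw [zeta_eq_tsum_one_div_nat_cpow hs]
    exact (Complex.summable_one_div_nat_cpow.2 hs).hasSum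
  have := (Function.Injective.hasSum_iff (f := fun n : ℕ => 1 / (n : ℂ) ^ s) PNat.coe_injective (a := riemannZeta s) ?_).2 h
  · exact this
  · intro x hx
    have : x = 0 := by
      by_contra h
      exact hx ⟨⟨x, Nat.pos_of_ne_zero h⟩, rfl⟩
    simp [this, Complex.zero_cpow h0]

lemma hasSum_dvd (s : ℂ) (hs : 1 < s.re) (e : ℕ) (he : 0 < e) (a : ℂ) :
    HasSum (fun c : ℕ+ => if e ∣ (c : ℕ) then a / (c : ℂ) ^ s else 0)
      (a * (e : ℂ) ^ (-s) * riemannZeta s) := by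
  have hinj : Function.Injective (fun c : ℕ+ => tp e he * c) := mul_right_injective _
  refine (hinj.hasSum_iff ?_).1 ?_
  · intro x hx
    rw [if_neg]
    rintro ⟨y, hy⟩
    have hy0 : 0 < y := by
      rcases Nat.eq_zero_or_pos y with h | h
      · subst h; have := x.pos; omega
      · exact h
    exact hx ⟨tp y hy0, PNat.eq (by simp [hy])⟩
  · refine Eq.subst (motive := fun F => HasSum F _) ?_
      ((hasSum_zeta s hs).mul_left (a * (e : ℂ) ^ (-s)))
    funext c
    have h1 := Complex.natCast_mul_natCast_cpow e c s
    simp only [Function.comp, PNat.mul_coe, tp_coe, dvd_mul_right, if_true, Nat.cast_mul, h1,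
      Complex.cpow_neg]
    rw [div_eq_mul_inv a, mul_inv, one_div, mul_assoc]

lemma hasSum_gcd (lam : ℤ) (hlam : lam ≠ 0) (s : ℂ) (hs : 1 < s.re) :
    HasSum (fun c : ℕ+ => ((lam.gcd (c : ℕ) : ℕ) : ℂ) ^ (2 - 2 * s) / (c : ℂ) ^ s)
      (corr lam s * riemannZeta s) := by
  have := hasSum_sum (s := lam.natAbs.divisors) fun e he =>
    hasSum_dvd s hs e (Nat.pos_of_mem_divisors he) (hz (2 - 2 * s) e)
  rw [← Finset.sum_mul] at this
  change HasSum _ (corr lam s * riemannZeta s) at this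
  convert this using 1
  ext c
  rw [← sum_hz _ _ (by exact Int.gcd_pos_of_ne_zero_left _ hlam), Finset.sum_div, ← Finset.sum_filter]
  refine Finset.sum_congr ?_ fun _ _ => rfl
  ext e
  simp [Int.gcd, Nat.dvd_gcd_iff, hlam]

lemma summable_norm_gcd (lam : ℤ) (hlam : lam ≠ 0) (s : ℂ) (hs : 1 < s.re) :
    Summable (fun c : ℕ+ => ‖((lam.gcd (c : ℕ) : ℕ) : ℂ) ^ (2 - 2 * s) / (c : ℂ) ^ s‖) :=
  (hasSum_gcd lam hlam s hs).summable.norm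

lemma hasSum_mul_norm {α β : Type} (f : α → ℂ) (g : β → ℂ) (a b : ℂ) (hf : HasSum f a)
    (hg : HasSum g b) : HasSum (fun p : α × β => f p.1 * g p.2) (a * b) :=
  hf.mul hg (summable_mul_of_summable_norm hf.summable.norm hg.summable.norm)

/-- auxiliary -/
noncomputable def z1 (s : ℂ) (c : ℕ+) : ℂ := 1 / (c : ℂ) ^ s

/-- auxiliary -/
noncomputable def z2 (lam : ℤ) (s : ℂ) (c : ℕ+) : ℂ :=
  ((lam.gcd (c : ℕ) : ℕ) : ℂ) ^ (2 - 2 * s) / (c : ℂ) ^ s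

lemma hasSum_prod (lam : ℤ) (hlam : lam ≠ 0) (s : ℂ) (hs : 1 < s.re) :
    HasSum (fun p : ℕ+ × ℕ+ × ℕ+ => z1 s p.1 * (z1 (2 * s - 1) p.2.1 * z2 lam s p.2.2))
      (riemannZeta s * (riemannZeta (2 * s - 1) * (corr lam s * riemannZeta s))) := by
  have h1 : HasSum (z1 s) _ := hasSum_zeta s hs
  have h2 : HasSum (z1 (2 * s - 1)) _ := hasSum_zeta (2 * s - 1) (by simp; linarith)
  have h3 : HasSum (z2 lam s) _ := hasSum_gcd lam hlam s hs
  have h23 := hasSum_mul_norm (z1 (2 * s - 1)) (z2 lam s) _ _ h2 h3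
  exact hasSum_mul_norm (z1 s) (fun q : ℕ+ × ℕ+ => z1 (2 * s - 1) q.1 * z2 lam s q.2) _ _ h1 h23

/-- number of ideals with given diagonal -/
def cnt (lam : ℤ) (p : ℕ+ × ℕ+ × ℕ+) : ℕ :=
  if lam.gcd (p.2.2 : ℕ) ∣ (p.2.1 : ℕ) then lam.gcd (p.2.2 : ℕ) * p.2.1 else 0

/-- norm -/
def nrm (p : ℕ+ × ℕ+ × ℕ+) : ℕ+ := p.2.1 * p.1 * p.2.1 * p.2.2

lemma hasSum_main (lam : ℤ) (hlam : lam ≠ 0) (s : ℂ) (hs : 1 < s.re) :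
    HasSum (fun p : ℕ+ × ℕ+ × ℕ+ => (cnt lam p : ℂ) * (1 / (nrm p : ℂ) ^ s))
      (riemannZeta s * (riemannZeta (2 * s - 1) * (corr lam s * riemannZeta s))) := by
  have hg (c : ℕ) : 0 < lam.gcd c := Int.gcd_pos_of_ne_zero_left _ hlam
  let j : ℕ+ × ℕ+ × ℕ+ → ℕ+ × ℕ+ × ℕ+ := fun p => (p.1, tp (lam.gcd (p.2.2 : ℕ)) (hg _) * p.2.1, p.2.2)
  have hj : Function.Injective j := by
    rintro ⟨d, b, c⟩ ⟨d', b', c'⟩ h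
    simp only [j, Prod.mk.injEq] at h
    obtain ⟨rfl, h, rfl⟩ := h
    simpa using h
  refine (hj.hasSum_iff ?_).1 ?_
  · rintro ⟨d, b, c⟩ hx
    have : ¬ lam.gcd (c : ℕ) ∣ (b : ℕ) := by
      rintro ⟨y, hy⟩
      have hy0 : 0 < y := by
        rcases Nat.eq_zero_or_pos y with h | h
        · subst h; have := b.pos; omega
        · exact h
      refine hx ⟨(d, tp y hy0, c), ?_⟩
      simp only [j, Prod.mk.injEq, true_and, and_true]
      exact PNat.eq (by simp [hy])
    simp [cnt, this]
  · convert hasSum_prod lam hlam s hs using 1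
    ext ⟨d, b, c⟩
    have hg0 : ((lam.gcd (c : ℕ) : ℕ) : ℂ) ≠ 0 := by exact_mod_cast (hg _).ne'
    have hb0 : ((b : ℕ) : ℂ) ≠ 0 := by exact_mod_cast b.pos.ne'
    simp only [Function.comp, j, cnt, nrm, z1, z2, PNat.mul_coe, tp_coe, dvd_mul_right, if_true]
    set g := lam.gcd (c : ℕ)
    push_cast
    have e : ((g : ℂ) * b * d * (g * b) * c) ^ s = (g : ℂ) ^ s * (b : ℂ) ^ s * (d : ℂ) ^ s * ((g : ℂ) ^ s * (b : ℂ) ^ s) * (c : ℂ) ^ s := by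
      have := Complex.natCast_mul_natCast_cpow (g * b * d * (g * b)) c s
      have h2 := Complex.natCast_mul_natCast_cpow (g * b * d) (g * b) s
      have h3 := Complex.natCast_mul_natCast_cpow (g * b) d s
      have h4 := Complex.natCast_mul_natCast_cpow g b s
      push_cast at *
      rw [this, h2, h3, h4]
    rw [e]
    have e1 : (b : ℂ) ^ (2 * s - 1) = (b : ℂ) ^ s * (b : ℂ) ^ s / b := by
      rw [Complex.cpow_sub _ _ hb0, two_mul, Complex.cpow_add _ _ hb0, Complex.cpow_one]
    have e2 : (g : ℂ) ^ (2 - 2 * s) = g * g / ((g : ℂ) ^ s * (g : ℂ) ^ s) := by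
      rw [Complex.cpow_sub _ _ hg0, two_mul s, Complex.cpow_add _ _ hg0]
      norm_num [sq]
    rw [e1, e2]
    have k1 : (b : ℂ) ^ s ≠ 0 := by simp [Complex.cpow_eq_zero_iff]
    have k2 : (g : ℂ) ^ s ≠ 0 := by simp [Complex.cpow_eq_zero_iff, hg0]
    have k3 : (c : ℂ) ^ s ≠ 0 := by simp [Complex.cpow_eq_zero_iff]
    have k4 : (d : ℂ) ^ s ≠ 0 := by simp [Complex.cpow_eq_zero_iff]
    field_simp

lemma card_range_modEq (n m : ℕ) (hn : 0 < n) (_ : 0 < m) (r : ℤ) :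
    ((Finset.range (n * m)).filter (fun w : ℕ => (n : ℤ) ∣ (w : ℤ) - r)).card = m := by
  have h := Nat.count_modEq_card (n * m) hn (r % n).toNat
  rw [Nat.count_eq_card_filter_range] at h
  simp only [Nat.mul_mod_right, Nat.not_lt_zero, if_false, add_zero, Nat.mul_div_cancel_left _ hn] at h
  refine Eq.trans ?_ h
  congr 1
  ext w
  simp only [Finset.mem_filter, Finset.mem_range, and_congr_right_iff]
  intro _
  have hr : (((r % n).toNat : ℕ) : ℤ) = r % n := Int.toNat_of_nonneg (Int.emod_nonneg _ (by omega))
  rw [← Int.natCast_modEq_iff, hr, Int.modEq_comm, Int.modEq_iff_dvd]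
  constructor
  · intro h
    have : (w : ℤ) - r % n = (w - r) + n * (r / n) := by rw [Int.emod_def]; ring
    rw [this]; exact dvd_add h (dvd_mul_right _ _)
  · intro h
    have : (w : ℤ) - r = (w - r % n) - n * (r / n) := by rw [Int.emod_def]; ring
    rw [this]; exact dvd_sub h (dvd_mul_right _ _)

lemma card_lin (lam : ℤ) (hlam : lam ≠ 0) (c : ℕ) (hc : 0 < c) (t : ℤ) :
    ((Finset.range c).filter (fun w : ℕ => (c : ℤ) ∣ t + lam * w)).card =
      if (lam.gcd c : ℤ) ∣ t then lam.gcd c else 0 := by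
  have hg : 0 < lam.gcd c := Int.gcd_pos_of_ne_zero_left _ hlam
  obtain ⟨c', hc'⟩ : lam.gcd c ∣ c := by exact_mod_cast Int.gcd_dvd_right lam c
  obtain ⟨l', hl'⟩ : (lam.gcd c : ℤ) ∣ lam := Int.gcd_dvd_left lam c
  have hcop : IsCoprime l' (c' : ℤ) := by
    rw [Int.isCoprime_iff_gcd_eq_one]
    have h1 : lam.gcd c = lam.gcd c * l'.gcd c' := by
      have h2 : lam.gcd c = ((lam.gcd c : ℤ) * l').gcd ((lam.gcd c : ℤ) * c') := by
        rw [← hl']; congr 1; exact_mod_cast hc'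
      rwa [Int.gcd_mul_left, Int.natAbs_natCast] at h2
    exact (Nat.eq_of_mul_eq_mul_left hg (by omega))
  set g := lam.gcd c
  have hc0 : 0 < c' := by
    rcases Nat.eq_zero_or_pos c' with h | h
    · subst h; omega
    · exact h
  split_ifs with h
  · obtain ⟨t', rfl⟩ := h
    obtain ⟨x, y, hxy⟩ := hcop
    refine Eq.trans ?_ (card_range_modEq c' g hc0 hg (- x * t'))
    rw [mul_comm c' g, ← hc']
    congr 1
    ext w
    simp only [Finset.mem_filter, Finset.mem_range, and_congr_right_iff]
    intro _
    have hcz : (c : ℤ) = g * c' := by exact_mod_cast hc'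
    have : (g : ℤ) * t' + lam * w = g * (t' + l' * w) := by
      rw [hl']; ring
    rw [this, hcz, mul_dvd_mul_iff_left (by exact_mod_cast hg.ne')]
    constructor
    · rintro ⟨k, hk⟩
      exact ⟨x * k + y * w, by linear_combination x * hk - w * hxy⟩
    · rintro ⟨k, hk⟩
      exact ⟨l' * k + y * t', by linear_combination l' * hk - t' * hxy⟩
  · rw [Finset.card_eq_zero, Finset.filter_eq_empty_iff]
    intro w _ hd
    apply h
    have h1 : (g : ℤ) ∣ t + lam * w := (Int.gcd_dvd_right lam c).trans hd
    have h2 : (g : ℤ) ∣ lam * w := Dvd.dvd.mul_right (Int.gcd_dvd_left lam c) _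
    exact (dvd_add_left h2).1 h1

/-- off-diagonal parameters `(w, u, v)` -/
def prm (lam : ℤ) (p : ℕ+ × ℕ+ × ℕ+) : Finset (ℕ × ℕ × ℕ) :=
  (Finset.range p.2.2 ×ˢ Finset.range p.2.1 ×ˢ Finset.range p.2.2).filter fun q =>
    ((p.2.2 : ℕ) : ℤ) ∣ (p.2.1 : ℕ) + lam * q.1 ∧
    ((p.2.2 : ℕ) : ℤ) ∣ ((q.2.1 : ℤ) - (p.1 : ℕ) * q.1) + lam * q.2.2

lemma card_prm (lam : ℤ) (hlam : lam ≠ 0) (p : ℕ+ × ℕ+ × ℕ+) : (prm lam p).card = cnt lam p := by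
  obtain ⟨d, b, c⟩ := p
  have hg : 0 < lam.gcd (c : ℕ) := Int.gcd_pos_of_ne_zero_left _ hlam
  have e1 := card_lin lam hlam c c.pos (b : ℕ)
  simp only [prm, cnt]
  rw [Finset.card_filter, Finset.sum_product]
  simp only [Finset.sum_product]
  have key : ∀ w : ℕ, (∑ u ∈ Finset.range b, ∑ v ∈ Finset.range c,
      if ((c : ℕ) : ℤ) ∣ (b : ℕ) + lam * w ∧ ((c : ℕ) : ℤ) ∣ ((u : ℤ) - (d : ℕ) * w) + lam * v
        then 1 else 0) = if ((c : ℕ) : ℤ) ∣ (b : ℕ) + lam * w then (b : ℕ) else 0 := by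
    intro w
    by_cases hw : ((c : ℕ) : ℤ) ∣ (b : ℕ) + lam * w
    · simp only [hw, true_and, if_true]
      have hgb : lam.gcd (c : ℕ) ∣ (b : ℕ) := by
        have h1 : (lam.gcd (c : ℕ) : ℤ) ∣ (b : ℕ) + lam * w := (Int.gcd_dvd_right lam _).trans hw
        have h2 : (lam.gcd (c : ℕ) : ℤ) ∣ lam * w := Dvd.dvd.mul_right (Int.gcd_dvd_left lam _) _
        exact_mod_cast (dvd_add_left h2).1 h1
      simp only [← Finset.card_filter, card_lin lam hlam c c.pos]
      obtain ⟨m, hm⟩ := hgb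
      have hm0 : 0 < m := by
        rcases Nat.eq_zero_or_pos m with h | h
        · subst h; have := b.pos; omega
        · exact h
      rw [← Finset.sum_filter, Finset.sum_const, hm, card_range_modEq _ _ hg hm0, smul_eq_mul, mul_comm]
    · simp [hw]
  rw [Finset.sum_congr rfl fun w _ => key w, ← Finset.sum_filter, Finset.sum_const, e1]
  simp only [Int.natCast_dvd_natCast]
  split_ifs <;> simp

open Polynomial in
/-- the ring -/
abbrev RR (lam : ℤ) : Type :=
  ℤ[X] ⧸ Ideal.span {(X : ℤ[X]) ^ 2 * (X - C lam)}

open Polynomial in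
/-- coordinates to ring -/
noncomputable def psi (lam : ℤ) : ℤ × ℤ × ℤ →+ RR lam where
  toFun v := Ideal.Quotient.mk _ (C v.1 + C v.2.1 * X + C v.2.2 * X ^ 2)
  map_zero' := by simp
  map_add' v w := by
    rw [← map_add]
    congr 1
    simp only [Prod.fst_add, Prod.snd_add, map_add]
    ring

/-- multiplication by X in coordinates -/
def tt (lam : ℤ) (v : ℤ × ℤ × ℤ) : ℤ × ℤ × ℤ := (0, v.1, v.2.1 + lam * v.2.2)

open Polynomial in
lemma psi_tt (lam : ℤ) (v : ℤ × ℤ × ℤ) :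
    psi lam (tt lam v) = Ideal.Quotient.mk _ X * psi lam v := by
  simp only [psi, tt, AddMonoidHom.coe_mk, ZeroHom.coe_mk]
  rw [← map_mul, Ideal.Quotient.mk_eq_mk_iff_sub_mem, Ideal.mem_span_singleton]
  refine ⟨- C v.2.2, ?_⟩
  simp only [map_add, map_mul, map_zero]
  ring

open Polynomial in
lemma monic_ff (lam : ℤ) : ((X : ℤ[X]) ^ 2 * (X - C lam)).Monic :=
  (monic_X_pow 2).mul (monic_X_sub_C lam)

open Polynomial in
lemma natDegree_ff (lam : ℤ) : ((X : ℤ[X]) ^ 2 * (X - C lam)).natDegree = 3 := by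
  rw [Monic.natDegree_mul (monic_X_pow 2) (monic_X_sub_C lam), natDegree_X_pow, natDegree_X_sub_C]

open Polynomial in
lemma psi_inj (lam : ℤ) : Function.Injective (psi lam) := by
  rw [injective_iff_map_eq_zero]
  rintro ⟨x, y, z⟩ h
  simp only [psi, AddMonoidHom.coe_mk, ZeroHom.coe_mk] at h
  rw [Ideal.Quotient.eq_zero_iff_mem, Ideal.mem_span_singleton] at h
  have hd : (C x + C y * X + C z * X ^ 2 : ℤ[X]).natDegree < 3 := by
    have : (C x + C y * X + C z * X ^ 2 : ℤ[X]).natDegree ≤ 2 := by compute_degree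
    omega
  have h0 : (C x + C y * X + C z * X ^ 2 : ℤ[X]) = 0 := by
    by_contra hne
    have := (monic_ff lam).not_dvd_of_natDegree_lt hne (by rw [natDegree_ff]; exact hd)
    exact this h
  have c0 := congrArg (fun p => coeff p 0) h0
  have c1 := congrArg (fun p => coeff p 1) h0
  have c2 := congrArg (fun p => coeff p 2) h0
  simp [coeff_X, coeff_C, coeff_X_pow, -eq_intCast, -map_intCast, -algebraMap_int_eq] at c0 c1 c2
  simp [c0, c1, c2]

open Polynomial in
lemma psi_surj (lam : ℤ) : Function.Surjective (psi lam) := by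
  intro r
  obtain ⟨p, rfl⟩ := Ideal.Quotient.mk_surjective r
  set f : ℤ[X] := X ^ 2 * (X - C lam) with hf
  have hmon : f.Monic := monic_ff lam
  have hdeg : f.natDegree = 3 := natDegree_ff lam
  have hlt : (p %ₘ f).natDegree < 3 := by
    rw [← hdeg]
    exact natDegree_modByMonic_lt p hmon (by intro h; rw [h] at hdeg; simp at hdeg)
  refine ⟨((p %ₘ f).coeff 0, (p %ₘ f).coeff 1, (p %ₘ f).coeff 2), ?_⟩
  simp only [psi, AddMonoidHom.coe_mk, ZeroHom.coe_mk]
  have e : (C ((p %ₘ f).coeff 0) + C ((p %ₘ f).coeff 1) * X + C ((p %ₘ f).coeff 2) * X ^ 2 : ℤ[X])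
      = p %ₘ f := by
    conv_rhs => rw [(p %ₘ f).as_sum_range' 3 hlt]
    simp [Finset.sum_range_succ, ← C_mul_X_pow_eq_monomial]
  rw [e, Ideal.Quotient.mk_eq_mk_iff_sub_mem, Ideal.mem_span_singleton]
  exact ⟨-(p /ₘ f), by linear_combination modByMonic_add_div p f⟩

/-- the lattice spanned by `(a,u,v)`, `(0,b,w)`, `(0,0,c)` -/
def lat (a b c u v w : ℤ) : AddSubgroup (ℤ × ℤ × ℤ) where
  carrier := {x | ∃ r s t : ℤ, x = (r * a, r * u + s * b, r * v + s * w + t * c)}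
  zero_mem' := ⟨0, 0, 0, by simp; rfl⟩
  add_mem' := by
    rintro _ _ ⟨r, s, t, rfl⟩ ⟨r', s', t', rfl⟩
    refine ⟨r + r', s + s', t + t', ?_⟩
    simp only [Prod.mk_add_mk, Prod.mk.injEq]
    refine ⟨?_, ?_, ?_⟩ <;> ring
  neg_mem' := by
    rintro _ ⟨r, s, t, rfl⟩
    refine ⟨-r, -s, -t, ?_⟩
    simp only [Prod.neg_mk, Prod.mk.injEq]
    refine ⟨?_, ?_, ?_⟩ <;> ring

lemma mem_lat {a b c u v w x y z : ℤ} : (x, y, z) ∈ lat a b c u v w ↔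
    ∃ r s t : ℤ, x = r * a ∧ y = r * u + s * b ∧ z = r * v + s * w + t * c := by
  change (∃ r s t : ℤ, _ = _) ↔ _
  simp only [Prod.mk.injEq]

lemma index_lat (a b c : ℕ) (ha : 0 < a) (hb : 0 < b) (hc : 0 < c) (u v w : ℤ) :
    (lat a b c u v w).index = a * b * c := by
  let F : Fin a × Fin b × Fin c → (ℤ × ℤ × ℤ) ⧸ lat a b c u v w :=
    fun q => QuotientAddGroup.mk ((q.1 : ℤ), (q.2.1 : ℤ), (q.2.2 : ℤ))
  have key : ∀ (n : ℕ) (i j : Fin n) (r : ℤ), -(i : ℤ) + j = r * n → i = j ∧ r = 0 := by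
    intro n i j r h
    have hi := i.2
    have hj := j.2
    have hr : r = 0 := by
      by_contra hne
      rcases lt_or_gt_of_ne hne with h1 | h1
      · have : r * n ≤ -1 * n := by gcongr; omega
        omega
      · have : 1 * n ≤ r * (n : ℤ) := by gcongr; omega
        omega
    subst hr
    exact ⟨Fin.ext (by omega), rfl⟩
  have hF : Function.Bijective F := by
    constructor
    · rintro ⟨i, j, k⟩ ⟨i', j', k'⟩ h
      rw [QuotientAddGroup.eq] at h
      simp only [Prod.neg_mk, Prod.mk_add_mk] at h
      obtain ⟨r, s, t, h1, h2, h3⟩ := mem_lat.1 h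
      obtain ⟨rfl, rfl⟩ := key _ _ _ _ h1
      obtain ⟨rfl, rfl⟩ := key _ j j' s (by linarith)
      obtain ⟨rfl, rfl⟩ := key _ k k' t (by linarith)
      rfl
    · intro q
      obtain ⟨⟨x, y, z⟩, rfl⟩ := QuotientAddGroup.mk_surjective q
      have red : ∀ (n : ℕ), 0 < n → ∀ x : ℤ, ∃ (i : Fin n) (r : ℤ), -(i : ℤ) + x = r * n := by
        intro n hn x
        have h0 := Int.emod_nonneg x (b := n) (by omega)
        have h1 := Int.emod_lt_of_pos x (b := n) (by omega)
        refine ⟨⟨(x % n).toNat, by omega⟩, x / n, ?_⟩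
        have h2 := Int.emod_add_mul_ediv x n
        have h3 : (((x % n).toNat : ℕ) : ℤ) = x % n := Int.toNat_of_nonneg h0
        simp only [h3]
        linarith
      obtain ⟨i, r, hi⟩ := red a ha x
      obtain ⟨j, s, hj⟩ := red b hb (y - r * u)
      obtain ⟨k, t, hk⟩ := red c hc (z - r * v - s * w)
      refine ⟨(i, j, k), ?_⟩
      rw [QuotientAddGroup.eq]
      simp only [Prod.neg_mk, Prod.mk_add_mk]
      exact mem_lat.2 ⟨r, s, t, hi, by linarith, by linarith⟩
  rw [AddSubgroup.index, ← Nat.card_congr (Equiv.ofBijective F hF)]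
  simp [mul_assoc]

lemma tt_lat (lam : ℤ) (d b c u v w : ℤ) (h1 : c ∣ b + lam * w) (h2 : c ∣ (u - d * w) + lam * v)
    (x : ℤ × ℤ × ℤ) (hx : x ∈ lat (b * d) b c u v w) : tt lam x ∈ lat (b * d) b c u v w := by
  obtain ⟨x, y, z⟩ := x
  obtain ⟨r, s, t, rfl, rfl, rfl⟩ := mem_lat.1 hx
  obtain ⟨k, hk⟩ := h1
  obtain ⟨l, hl⟩ := h2
  exact mem_lat.2 ⟨0, r * d, r * l + s * k + lam * t, by ring, by ring,
    by simp only; linear_combination r * hl + s * hk⟩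

lemma gen_pos (H : AddSubgroup ℤ) (n : ℤ) (hn : n ≠ 0) (h : n ∈ H) :
    ∃ a : ℕ, 0 < a ∧ ∀ x, x ∈ H ↔ (a : ℤ) ∣ x := by
  obtain ⟨a, rfl⟩ := Int.subgroup_cyclic H
  have hm : ∀ x, x ∈ AddSubgroup.closure {a} ↔ a ∣ x := by
    intro x
    rw [← AddSubgroup.zmultiples_eq_closure, Int.mem_zmultiples_iff]
  refine ⟨a.natAbs, ?_, fun x => by rw [hm, Int.natAbs_dvd]⟩
  rw [Int.natAbs_pos]
  rintro rfl
  exact hn (by simpa using (hm n).1 h)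

lemma exists_lat (lam : ℤ) (L : AddSubgroup (ℤ × ℤ × ℤ)) (hL : L.index ≠ 0)
    (hT : ∀ x ∈ L, tt lam x ∈ L) :
    ∃ d b c u v w : ℕ, 0 < d ∧ 0 < b ∧ 0 < c ∧ u < b ∧ v < c ∧ w < c ∧
      (c : ℤ) ∣ b + lam * w ∧ (c : ℤ) ∣ ((u : ℤ) - d * w) + lam * v ∧
      L = lat (b * d) b c u v w := by
  have hn : ∀ x : ℤ × ℤ × ℤ, L.index • x ∈ L := fun x => L.nsmul_index_mem x
  have hn0 : (L.index : ℤ) ≠ 0 := by exact_mod_cast hL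
  obtain ⟨c, hc, hcm⟩ := gen_pos
    (L.comap ((AddMonoidHom.inr ℤ (ℤ × ℤ)).comp (AddMonoidHom.inr ℤ ℤ))) L.index hn0
    (by simpa using hn (0, 0, 1))
  obtain ⟨b, hb, hbm⟩ := gen_pos
    ((L.comap (AddMonoidHom.inr ℤ (ℤ × ℤ))).map (AddMonoidHom.fst ℤ ℤ)) L.index hn0
    ⟨(L.index, 0), by simpa using hn (0, 1, 0), rfl⟩
  obtain ⟨a, ha, ham⟩ := gen_pos (L.map (AddMonoidHom.fst ℤ (ℤ × ℤ))) L.index hn0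
    ⟨(L.index, 0, 0), by simpa using hn (1, 0, 0), rfl⟩
  have hcm' : ∀ z : ℤ, (0, 0, z) ∈ L ↔ (c : ℤ) ∣ z := fun z => by rw [← hcm]; rfl
  have hbm' : ∀ y z : ℤ, (0, y, z) ∈ L → (b : ℤ) ∣ y := fun y z h =>
    (hbm y).1 ⟨(y, z), h, rfl⟩
  have ham' : ∀ x y z : ℤ, (x, y, z) ∈ L → (a : ℤ) ∣ x := fun x y z h =>
    (ham x).1 ⟨(x, y, z), h, rfl⟩
  obtain ⟨⟨b0, w0⟩, hbw, hb0⟩ := (hbm b).2 dvd_rfl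
  obtain ⟨⟨a0, u0, v0⟩, hauv, ha0⟩ := (ham a).2 dvd_rfl
  replace hb0 : b0 = b := hb0
  replace ha0 : a0 = a := ha0
  subst hb0 ha0
  replace hbw : ((0 : ℤ), (b : ℤ), w0) ∈ L := hbw
  replace hauv : ((a : ℤ), u0, v0) ∈ L := hauv
  have hcL : ((0 : ℤ), (0 : ℤ), (c : ℤ)) ∈ L := (hcm' _).2 dvd_rfl
  have red : ∀ (n : ℕ), 0 < n → ∀ x : ℤ, ∃ (i : ℕ) (r : ℤ), i < n ∧ (i : ℤ) = x + r * n := by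
    intro n hn x
    have h0 := Int.emod_nonneg x (b := n) (by omega)
    have h1 := Int.emod_lt_of_pos x (b := n) (by omega)
    refine ⟨(x % n).toNat, -(x / n), by omega, ?_⟩
    have h2 := Int.emod_add_mul_ediv x n
    have h3 : (((x % n).toNat : ℕ) : ℤ) = x % n := Int.toNat_of_nonneg h0
    rw [h3]
    linarith
  obtain ⟨w, r, hw, hwr⟩ := red c hc w0
  have hbw' : ((0 : ℤ), (b : ℤ), (w : ℤ)) ∈ L := by
    have := L.add_mem hbw (L.zsmul_mem hcL r)
    simpa [hwr] using this
  obtain ⟨u, s, hu, hus⟩ := red b hb u0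
  have h1 := L.add_mem hauv (L.zsmul_mem hbw' s)
  obtain ⟨v, t, hv, hvt⟩ := red c hc (v0 + s * w)
  have hauv' : ((a : ℤ), (u : ℤ), (v : ℤ)) ∈ L := by
    have := L.add_mem h1 (L.zsmul_mem hcL t)
    simpa [hus, hvt] using this
  have t1 : ((0 : ℤ), (0 : ℤ), (b : ℤ) + lam * w) ∈ L := hT _ hbw'
  have t2 : ((0 : ℤ), (a : ℤ), (u : ℤ) + lam * v) ∈ L := hT _ hauv'
  obtain ⟨d, hd⟩ : b ∣ a := by exact_mod_cast hbm' _ _ t2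
  have hd0 : 0 < d := by
    rcases Nat.eq_zero_or_pos d with h | h
    · subst h; omega
    · exact h
  have hdz : (a : ℤ) = b * d := by exact_mod_cast hd
  refine ⟨d, b, c, u, v, w, hd0, hb, hc, hu, hv, hw, (hcm' _).1 t1, ?_, ?_⟩
  · have := L.sub_mem t2 (L.zsmul_mem hbw' d)
    rw [← hcm']
    convert this using 1
    simp [hdz]
    exact ⟨by ring, by ring⟩
  · ext ⟨x, y, z⟩
    rw [← hdz, mem_lat]
    constructor
    · intro h
      obtain ⟨r, rfl⟩ := ham' _ _ _ h
      have h2 := L.sub_mem h (L.zsmul_mem hauv' r)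
      have h2' : ((0 : ℤ), y - r * u, z - r * v) ∈ L := by
        convert h2 using 1
        simp [mul_comm]
      obtain ⟨s, hs⟩ := hbm' _ _ h2'
      have h3 := L.sub_mem h2' (L.zsmul_mem hbw' s)
      have h3' : ((0 : ℤ), (0 : ℤ), z - r * v - s * w) ∈ L := by
        convert h3 using 1
        simp [hs, mul_comm]
      obtain ⟨t, ht⟩ := (hcm' _).1 h3'
      exact ⟨r, s, t, by ring, by linarith, by linarith⟩
    · rintro ⟨r, s, t, rfl, rfl, rfl⟩
      have := L.add_mem (L.add_mem (L.zsmul_mem hauv' r) (L.zsmul_mem hbw' s)) (L.zsmul_mem hcL t)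
      convert this using 1
      simp

lemma lat_inj (a b c u v w a' b' c' u' v' w' : ℕ) (hb : 0 < b)
    (ha : 0 < a)
    (hu : u < b) (hv : v < c) (hw : w < c) (hu' : u' < b') (hv' : v' < c') (hw' : w' < c')
    (h : lat a b c u v w = lat a' b' c' u' v' w') :
    a = a' ∧ b = b' ∧ c = c' ∧ u = u' ∧ v = v' ∧ w = w' := by
  have key : ∀ (a b c u v w a' b' c' u' v' w' : ℕ), 0 < a' → 0 < b' → 
      lat a b c u v w = lat a' b' c' u' v' w' → a' ∣ a ∧ b' ∣ b ∧ c' ∣ c := by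
    intro a b c u v w a' b' c' u' v' w' ha' hb' h
    have m1 : ((a : ℤ), (u : ℤ), (v : ℤ)) ∈ lat a' b' c' u' v' w' := by
      rw [← h]; exact mem_lat.2 ⟨1, 0, 0, by ring, by ring, by ring⟩
    have m2 : ((0 : ℤ), (b : ℤ), (w : ℤ)) ∈ lat a' b' c' u' v' w' := by
      rw [← h]; exact mem_lat.2 ⟨0, 1, 0, by ring, by ring, by ring⟩
    have m3 : ((0 : ℤ), (0 : ℤ), (c : ℤ)) ∈ lat a' b' c' u' v' w' := by
      rw [← h]; exact mem_lat.2 ⟨0, 0, 1, by ring, by ring, by ring⟩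
    refine ⟨?_, ?_, ?_⟩
    · obtain ⟨r, s, t, h1, h2, h3⟩ := mem_lat.1 m1
      exact Int.natCast_dvd_natCast.1 ⟨r, by linarith⟩
    · obtain ⟨r, s, t, h1, h2, h3⟩ := mem_lat.1 m2
      have : r = 0 := by
        rcases mul_eq_zero.1 h1.symm with h | h
        · exact h
        · omega
      subst this
      exact Int.natCast_dvd_natCast.1 ⟨s, by linarith⟩
    · obtain ⟨r, s, t, h1, h2, h3⟩ := mem_lat.1 m3
      have : r = 0 := by
        rcases mul_eq_zero.1 h1.symm with h | h
        · exact h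
        · omega
      subst this
      have : s = 0 := by
        rcases mul_eq_zero.1 (by linarith : s * (b' : ℤ) = 0) with h | h
        · exact h
        · omega
      subst this
      exact Int.natCast_dvd_natCast.1 ⟨t, by linarith⟩
  have k2 := key a' b' c' u' v' w' a b c u v w ha hb h.symm
  have k1 := key a b c u v w a' b' c' u' v' w' (by
    rcases Nat.eq_zero_or_pos a' with h0 | h0
    · exfalso
      subst h0
      have m1 : ((a : ℤ), (u : ℤ), (v : ℤ)) ∈ lat (0 : ℕ) b' c' u' v' w' := by
        rw [← h]; exact mem_lat.2 ⟨1, 0, 0, by ring, by ring, by ring⟩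
      obtain ⟨r, s, t, h1, h2, h3⟩ := mem_lat.1 m1
      simp at h1; omega
    · exact h0) (by omega) h
  obtain rfl := Nat.dvd_antisymm k2.1 k1.1
  obtain rfl := Nat.dvd_antisymm k2.2.1 k1.2.1
  obtain rfl := Nat.dvd_antisymm k2.2.2 k1.2.2
  have small : ∀ (n i j : ℕ) (r : ℤ), i < n → j < n → (i : ℤ) = j + r * n → i = j ∧ r = 0 := by
    intro n i j r hi hj h
    have hr : r = 0 := by
      by_contra hne
      rcases lt_or_gt_of_ne hne with h1 | h1
      · have : r * n ≤ -1 * n := by gcongr; omega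
        omega
      · have : 1 * n ≤ r * (n : ℤ) := by gcongr; omega
        omega
    subst hr
    exact ⟨by omega, rfl⟩
  have m1 : ((a : ℤ), (u : ℤ), (v : ℤ)) ∈ lat a b c u' v' w' := by
    rw [← h]; exact mem_lat.2 ⟨1, 0, 0, by ring, by ring, by ring⟩
  have m2 : ((0 : ℤ), (b : ℤ), (w : ℤ)) ∈ lat a b c u' v' w' := by
    rw [← h]; exact mem_lat.2 ⟨0, 1, 0, by ring, by ring, by ring⟩
  refine ⟨rfl, rfl, rfl, ?_⟩
  obtain ⟨r, s, t, h1, h2, h3⟩ := mem_lat.1 m1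
  have hr : r = 1 := by
    have : (r - 1) * (a : ℤ) = 0 := by linarith
    rcases mul_eq_zero.1 this with h | h <;> omega
  subst hr
  obtain ⟨rfl, rfl⟩ := small b u u' s hu hu' (by linarith)
  obtain ⟨rfl, rfl⟩ := small c v v' t hv hv' (by linarith)
  obtain ⟨r, s, t, h1, h2, h3⟩ := mem_lat.1 m2
  have hr : r = 0 := by
    rcases mul_eq_zero.1 h1.symm with h | h <;> omega
  subst hr
  have hs : s = 1 := by
    have : (s - 1) * (b : ℤ) = 0 := by linarith
    rcases mul_eq_zero.1 this with h | h <;> omega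
  subst hs
  obtain ⟨rfl, rfl⟩ := small c w w' t hw hw' (by linarith)
  exact ⟨rfl, rfl, rfl⟩

/-- the T-stable lattice attached to parameters -/
def latT (lam : ℤ) (t : Σ p, prm lam p) : AddSubgroup (ℤ × ℤ × ℤ) :=
  lat (((t.1.2.1 * t.1.1 : ℕ+) : ℕ) : ℤ) (t.1.2.1 : ℕ) (t.1.2.2 : ℕ) t.2.1.2.1 t.2.1.2.2 t.2.1.1

lemma tt_latT (lam : ℤ) (t : Σ p, prm lam p) (x : ℤ × ℤ × ℤ) (hx : x ∈ latT lam t) :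
    tt lam x ∈ latT lam t := by
  obtain ⟨⟨d, b, c⟩, ⟨⟨w, u, v⟩, h⟩⟩ := t
  simp only [prm, Finset.mem_filter] at h
  simp only [latT, PNat.mul_coe, Nat.cast_mul] at hx ⊢
  exact tt_lat lam _ _ _ _ _ _ h.2.1 h.2.2 x hx

open Polynomial in
/-- ideal from stable lattice -/
noncomputable def idl (lam : ℤ) (L : AddSubgroup (ℤ × ℤ × ℤ)) (hL : ∀ x ∈ L, tt lam x ∈ L) :
    Ideal (RR lam) where
  carrier := (L.map (psi lam) : Set (RR lam))
  zero_mem' := (L.map (psi lam)).zero_mem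
  add_mem' h h' := (L.map (psi lam)).add_mem h h'
  smul_mem' := by
    intro r x hx
    obtain ⟨p, rfl⟩ := Ideal.Quotient.mk_surjective r
    change _ ∈ L.map (psi lam)
    replace hx : x ∈ L.map (psi lam) := hx
    rw [smul_eq_mul]
    induction p using Polynomial.induction_on generalizing x with
    | C a =>
      have : (Ideal.Quotient.mk (Ideal.span {(X : ℤ[X]) ^ 2 * (X - C lam)})) (C a) * x = a • x := by
        rw [zsmul_eq_mul]; congr 1
      rw [this]
      exact AddSubgroup.zsmul_mem _ hx a
    | add p q hp hq =>
      rw [map_add, add_mul]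
      exact AddSubgroup.add_mem _ (hp hx) (hq hx)
    | monomial n a ih =>
      have : (C a * X ^ (n + 1) : ℤ[X]) = (C a * X ^ n) * X := by ring
      rw [this, map_mul, mul_assoc]
      apply ih
      obtain ⟨v, hv, rfl⟩ := hx
      exact ⟨tt lam v, hL v hv, psi_tt lam v⟩

lemma idl_comap (lam : ℤ) (L : AddSubgroup (ℤ × ℤ × ℤ)) (hL : ∀ x ∈ L, tt lam x ∈ L) :
    (idl lam L hL).toAddSubgroup.comap (psi lam) = L := by
  ext x
  change psi lam x ∈ L.map (psi lam) ↔ _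
  constructor
  · rintro ⟨y, hy, h⟩
    rwa [← psi_inj lam h]
  · intro h
    exact ⟨x, h, rfl⟩

lemma card_quot (lam : ℤ) (I : Ideal (RR lam)) :
    Nat.card (RR lam ⧸ I) = (I.toAddSubgroup.comap (psi lam)).index := by
  rw [AddSubgroup.index_comap_of_surjective _ (psi_surj lam)]
  rfl

/-- ideal from parameters -/
noncomputable def idT (lam : ℤ) (t : Σ p, prm lam p) : Ideal (RR lam) :=
  idl lam (latT lam t) (tt_latT lam t)

lemma card_idT (lam : ℤ) (t : Σ p, prm lam p) : Nat.card (RR lam ⧸ idT lam t) = nrm t.1 := by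
  rw [card_quot, idT, idl_comap, latT, index_lat _ _ _ (PNat.pos _) (PNat.pos _) (PNat.pos _)]
  simp [nrm]

lemma idT_inj (lam : ℤ) : Function.Injective (idT lam) := by
  intro t t' h
  have h1 : latT lam t = latT lam t' := by
    rw [← idl_comap lam _ (tt_latT lam t), ← idl_comap lam _ (tt_latT lam t')]
    exact congrArg (fun I : Ideal (RR lam) => I.toAddSubgroup.comap (psi lam)) h
  obtain ⟨⟨d, b, c⟩, ⟨⟨w, u, v⟩, hh⟩⟩ := t
  obtain ⟨⟨d', b', c'⟩, ⟨⟨w', u', v'⟩, hh'⟩⟩ := t'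
  have k := hh
  have k' := hh'
  simp only [prm, Finset.mem_filter, Finset.mem_product, Finset.mem_range] at k k'
  simp only [latT] at h1
  obtain ⟨e1, e2, e3, rfl, rfl, rfl⟩ := lat_inj _ _ _ _ _ _ _ _ _ _ _ _ b.pos (PNat.pos _)
    k.1.2.1 k.1.2.2 k.1.1 k'.1.2.1 k'.1.2.2 k'.1.1 h1
  obtain rfl := PNat.eq e2
  obtain rfl := PNat.eq e3
  obtain rfl : d = d' := by
    have := PNat.eq e1
    simpa using this
  rfl

lemma idT_surj (lam : ℤ) (I : Ideal (RR lam)) (hI : Nat.card (RR lam ⧸ I) ≠ 0) :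
    ∃ t, idT lam t = I := by
  rw [card_quot] at hI
  obtain ⟨d, b, c, u, v, w, hd, hb, hc, hu, hv, hw, h1, h2, h3⟩ := exists_lat lam _ hI (by
    intro x hx
    change psi lam (tt lam x) ∈ I
    rw [psi_tt]
    exact I.mul_mem_left _ hx)
  have hmem : ((w, u, v) : ℕ × ℕ × ℕ) ∈ prm lam (tp d hd, tp b hb, tp c hc) := by
    rw [prm, Finset.mem_filter, Finset.mem_product, Finset.mem_product]
    simp only [Finset.mem_range, tp_coe]
    exact ⟨⟨hw, hu, hv⟩, h1, h2⟩
  refine ⟨⟨(tp d hd, tp b hb, tp c hc), ⟨(w, u, v), hmem⟩⟩, ?_⟩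
  · have : latT lam ⟨(tp d hd, tp b hb, tp c hc), ⟨(w, u, v), hmem⟩⟩ =
        I.toAddSubgroup.comap (psi lam) := by
      rw [h3]
      simp [latT]
    ext r
    obtain ⟨x, rfl⟩ := psi_surj lam r
    change psi lam x ∈ AddSubgroup.map (psi lam) _ ↔ _
    rw [this, AddSubgroup.map_comap_eq_self_of_surjective (psi_surj lam)]
    rfl

lemma idealCount_eq (lam : ℤ) (k : ℕ+) :
    idealCount (RR lam) k = Nat.card {t : Σ p, prm lam p // nrm t.1 = k} := by
  have : {I : Ideal (RR lam) | Nat.card (RR lam ⧸ I) = k} =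
      idT lam '' {t : Σ p, prm lam p | nrm t.1 = k} := by
    ext I
    simp only [Set.mem_ofPred_eq, Set.mem_image]
    constructor
    · intro h
      obtain ⟨t, rfl⟩ := idT_surj lam I (by rw [h]; exact k.pos.ne')
      rw [card_idT] at h
      exact ⟨t, PNat.eq h, rfl⟩
    · rintro ⟨t, h, rfl⟩
      rw [card_idT, h]
  rw [idealCount, this, Set.ncard_image_of_injective _ (idT_inj lam)]
  rfl

lemma hasSum_sig (lam : ℤ) (hlam : lam ≠ 0) (s : ℂ) (hs : 1 < s.re) :
    HasSum (fun t : Σ p, prm lam p => 1 / (nrm t.1 : ℂ) ^ s)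
      (riemannZeta s * (riemannZeta (2 * s - 1) * (corr lam s * riemannZeta s))) := by
  have hm := hasSum_main lam hlam s hs
  refine HasSum.sigma_of_hasSum hm ?_ ?_
  · intro p
    have := hasSum_fintype (fun _ : prm lam p => 1 / (nrm p : ℂ) ^ s)
    simpa [card_prm lam hlam] using this
  · apply Summable.of_norm
    rw [summable_sigma_of_nonneg (fun _ => norm_nonneg _)]
    refine ⟨fun p => Summable.of_finite, ?_⟩
    refine hm.summable.norm.congr fun p => ?_
    simp [card_prm lam hlam]

lemma hasSum_count (lam : ℤ) (hlam : lam ≠ 0) (s : ℂ) (hs : 1 < s.re) :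
    HasSum (fun k : ℕ+ => (idealCount (RR lam) k : ℂ) / (k : ℂ) ^ s)
      (riemannZeta s * (riemannZeta (2 * s - 1) * (corr lam s * riemannZeta s))) := by
  have h := (Equiv.sigmaFiberEquiv (fun t : Σ p, prm lam p => nrm t.1)).hasSum_iff.2
    (hasSum_sig lam hlam s hs)
  have h2 := h.sigma (fun k => (h.summable.sigma_factor k).hasSum)
  refine Eq.subst (motive := fun F => HasSum F _) ?_ h2
  funext k
  have : ∀ c : {t : Σ p, prm lam p // nrm t.1 = k},
      ((fun t : Σ p, prm lam p => 1 / (nrm t.1 : ℂ) ^ s) ∘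
        (Equiv.sigmaFiberEquiv (fun t : Σ p, prm lam p => nrm t.1))) ⟨k, c⟩ = 1 / (k : ℂ) ^ s := by
    rintro ⟨t, rfl⟩
    rfl
  rw [tsum_congr this, tsum_const, idealCount_eq, nsmul_eq_mul, mul_one_div]

/-- For `f = X²(X - λ)` with `λ ∈ ℤ` nonzero, the ideal zeta function of `ℤ[X]/(f)`
converges for `Re s > 1` and has a pole of order `3` at `s = 1`. -/
theorem ideal_zeta_lambda_pole_order_three (lam : ℤ) (hlam : lam ≠ 0) :
    ∃ δ > (0 : ℝ), ∃ g : ℂ → ℂ,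
      DifferentiableOn ℂ g {s : ℂ | 1 - δ < s.re} ∧ g 1 ≠ 0 ∧
      ∀ s : ℂ, 1 < s.re →
        HasSum
          (fun k : ℕ+ =>
            (idealCount
              (Polynomial ℤ ⧸ Ideal.span
                {(Polynomial.X : Polynomial ℤ) ^ 2 * (Polynomial.X - Polynomial.C lam)}) k : ℂ) /
              (k : ℂ) ^ s)
          (g s / (s - 1) ^ 3) := by
  refine ⟨1, one_pos, fun s => xz s * (xz (2 * s - 1) / 2 * (corr lam s * xz s)), ?_, ?_, ?_⟩
  · apply Differentiable.differentiableOn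
    have h1 := differentiable_xz
    have h2 := differentiable_corr lam
    have h3 : Differentiable ℂ fun s : ℂ => xz (2 * s - 1) := h1.comp (by fun_prop)
    exact h1.mul ((h3.div_const 2).mul (h2.mul h1))
  · have h1 : xz 1 = 1 := by simp [xz]
    have h2 : xz (2 * 1 - 1) = 1 := by norm_num [h1]
    simp only [h1, h2, corr_one lam hlam]
    norm_num
  · intro s hs
    have hs1 : s ≠ 1 := by rintro rfl; norm_num at hs
    have hs2 : 2 * s - 1 ≠ 1 := fun h => hs1 (by linear_combination h / 2)
    have hs0 : s - 1 ≠ 0 := sub_ne_zero.2 hs1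
    have e1 : xz s = (s - 1) * riemannZeta s := by simp [xz, hs1]
    have e2 : xz (2 * s - 1) = (2 * s - 1 - 1) * riemannZeta (2 * s - 1) := by
      rw [xz, Function.update_of_ne hs2]
    have e : xz s * (xz (2 * s - 1) / 2 * (corr lam s * xz s)) / (s - 1) ^ 3 =
        riemannZeta s * (riemannZeta (2 * s - 1) * (corr lam s * riemannZeta s)) := by
      rw [e1, e2, div_eq_iff (pow_ne_zero 3 hs0)]
      ring
    simp only [e]
    exact hasSum_count lam hlam s hs
end

section
/- Let p be a prime, n a positive integer, and l a non-negative integer. Then the number of ideals I of ℤ[X]/(X^n) such that the quotient is finite with exactly p^l elements equals the sum, over all n-tuples of non-negative integers (b_1, ..., b_n) with b_1 ≤ b_2 ≤ ... ≤ b_n and b_1 + ... + b_n = l, of p^{b_1 + b_2 + ... + b_{n−1}}. -/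
open Polynomial

theorem ic_quot_index {R : Type} [CommRing R] (I : Ideal R) :
    Nat.card (R ⧸ I) = (Submodule.toAddSubgroup I).index := rfl

/-- the colon ideal -/
noncomputable def icColon (I : Ideal ℤ[X]) : Ideal ℤ[X] :=
  Submodule.comap (LinearMap.mulLeft ℤ[X] (X : ℤ[X])) I

theorem mem_icColon (I : Ideal ℤ[X]) (f : ℤ[X]) : f ∈ icColon I ↔ X * f ∈ I := Iff.rfl

/-- constant coefficient -/
noncomputable def icE : ℤ[X] →+* ℤ := constantCoeff

theorem icE_surj : Function.Surjective icE := fun a => ⟨C a, by simp [icE]⟩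

theorem icE_X (f : ℤ[X]) : icE (X * f) = 0 := by simp [icE]

theorem icE_zero {f : ℤ[X]} (h : icE f = 0) : ∃ g, f = X * g :=
  X_dvd_iff.mpr (by simpa [icE] using h)

theorem ic_mem_map (I : Ideal ℤ[X]) (a : ℤ) : a ∈ I.map icE ↔ ∃ f ∈ I, icE f = a :=
  Ideal.mem_map_iff_of_surjective _ icE_surj

theorem ic_card (I : Ideal ℤ[X]) :
    Nat.card (ℤ[X] ⧸ I) = Nat.card (ℤ[X] ⧸ icColon I) * Nat.card (ℤ ⧸ I.map icE) := by
  rw [ic_quot_index, ic_quot_index, ic_quot_index]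
  set A := Submodule.toAddSubgroup I
  set m : ℤ[X] →+ ℤ[X] := AddMonoidHom.mulLeft X
  have h1 : Submodule.toAddSubgroup (icColon I) = A.comap m := rfl
  have h2 : ((Submodule.toAddSubgroup (I.map icE)).comap (icE : ℤ[X] →+ ℤ)) = A ⊔ m.range := by
    ext f
    rw [AddSubgroup.mem_comap, AddSubgroup.mem_sup]
    change icE f ∈ I.map icE ↔ _
    rw [ic_mem_map]
    constructor
    · rintro ⟨g, hg, h⟩
      obtain ⟨k, hk⟩ := icE_zero (f := f - g) (by simp [h])
      exact ⟨g, hg, X * k, ⟨k, rfl⟩, by rw [← hk]; ring⟩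
    · rintro ⟨g, hg, _, ⟨k, rfl⟩, rfl⟩
      refine ⟨g, hg, ?_⟩
      change icE g = icE (g + X * k)
      rw [map_add, icE_X, add_zero]
  have h3 := AddSubgroup.index_comap_of_surjective (Submodule.toAddSubgroup (I.map icE))
    (f := (icE : ℤ[X] →+ ℤ)) icE_surj
  rw [h1, AddSubgroup.index_comap, ← h3, h2, ← AddSubgroup.relIndex_sup_right]
  rw [sup_comm m.range A, AddSubgroup.relIndex_mul_index le_sup_left]

theorem ic_card_int (d : ℕ) : Nat.card (ℤ ⧸ Ideal.span {(d : ℤ)}) = d := by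
  rw [Nat.card_congr (Int.quotientSpanNatEquivZMod d).toEquiv, Nat.card_zmod]

theorem ic_ker_card (J : Ideal ℤ[X]) (hJ : Nat.card (ℤ[X] ⧸ J) ≠ 0) (d : ℕ)
    (hd : J.map icE = Ideal.span {(d : ℤ)}) :
    Nat.card (AddMonoidHom.mulLeft (Ideal.Quotient.mk J X)).ker = d := by
  have h1 := ic_card J
  rw [hd, ic_card_int] at h1
  set K := (AddMonoidHom.mulLeft (Ideal.Quotient.mk J X)).ker
  have h2 := AddSubgroup.index_comap_of_surjective K
    (f := ((Ideal.Quotient.mk J : ℤ[X] →+* _) : ℤ[X] →+ _)) Ideal.Quotient.mk_surjective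
  have h3 : K.comap ((Ideal.Quotient.mk J : ℤ[X] →+* _) : ℤ[X] →+ _) =
      Submodule.toAddSubgroup (icColon J) := by
    ext f
    rw [AddSubgroup.mem_comap, AddMonoidHom.mem_ker]
    change Ideal.Quotient.mk J X * Ideal.Quotient.mk J f = 0 ↔ X * f ∈ J
    rw [← map_mul, Ideal.Quotient.eq_zero_iff_mem]
  have h4 := K.card_mul_index
  rw [← h2, h3, ← ic_quot_index, h1, mul_comm] at h4
  rw [h1] at hJ
  exact Nat.eq_of_mul_eq_mul_left (Nat.pos_of_ne_zero (left_ne_zero_of_mul hJ)) h4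

/-- the ideal attached to `g` -/
noncomputable def icI (J : Ideal ℤ[X]) (d : ℤ) (g : ℤ[X]) : Ideal ℤ[X] :=
  Ideal.span {C d + X * g} ⊔ Ideal.span {X} * J

theorem mem_icI (J : Ideal ℤ[X]) (d : ℤ) (g f : ℤ[X]) :
    f ∈ icI J d g ↔ ∃ a, ∃ j ∈ J, f = a * (C d + X * g) + X * j := by
  unfold icI
  rw [Submodule.mem_sup]
  simp only [Ideal.mem_span_singleton', Ideal.mem_span_singleton_mul]
  constructor
  · rintro ⟨_, ⟨a, rfl⟩, _, ⟨j, hj, rfl⟩, rfl⟩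
    exact ⟨a, j, hj, rfl⟩
  · rintro ⟨a, j, hj, rfl⟩
    exact ⟨_, ⟨a, rfl⟩, _, ⟨j, hj, rfl⟩, rfl⟩

/-- the fibre -/
def icFib (J : Ideal ℤ[X]) (d : ℤ) : Set (Ideal ℤ[X]) :=
  {I | icColon I = J ∧ I.map icE = Ideal.span {d}}

theorem icE_gen (d : ℤ) (g : ℤ[X]) : icE (C d + X * g) = d := by
  rw [map_add, icE_X]; simp [icE]

theorem icI_mem (J : Ideal ℤ[X]) (d : ℤ) (hd : d ≠ 0) (g : ℤ[X]) (h : C d + X * g ∈ J) :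
    icI J d g ∈ icFib J d := by
  constructor
  · ext f
    rw [mem_icColon, mem_icI]
    constructor
    · rintro ⟨a, j, hj, e⟩
      have h0 := congrArg icE e
      rw [map_add, icE_X, icE_X, map_mul, icE_gen, add_zero] at h0
      obtain ⟨k, rfl⟩ := icE_zero (f := a) (by simpa [hd] using h0.symm)
      have : f = k * (C d + X * g) + j := mul_left_cancel₀ (X_ne_zero (R := ℤ)) (by rw [e]; ring)
      rw [this]
      exact J.add_mem (J.mul_mem_left _ h) hj
    · intro hf
      exact ⟨0, f, hf, by ring⟩
  · ext a
    rw [ic_mem_map, Ideal.mem_span_singleton']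
    constructor
    · rintro ⟨f, hf, rfl⟩
      obtain ⟨a, j, hj, rfl⟩ := (mem_icI _ _ _ _).1 hf
      exact ⟨icE a, by rw [map_add, map_mul, icE_X, icE_gen, add_zero]⟩
    · rintro ⟨a, rfl⟩
      refine ⟨C a * (C d + X * g), (mem_icI _ _ _ _).2 ⟨C a, 0, J.zero_mem, by ring⟩, ?_⟩
      rw [map_mul, icE_gen]; simp [icE]

theorem icI_eq (J : Ideal ℤ[X]) (d : ℤ) (g : ℤ[X]) (I : Ideal ℤ[X]) (hI : I ∈ icFib J d)
    (h : C d + X * g ∈ I) : icI J d g = I := by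
  obtain ⟨h1, h2⟩ := hI
  ext f
  rw [mem_icI]
  constructor
  · rintro ⟨a, j, hj, rfl⟩
    rw [← h1, mem_icColon] at hj
    exact I.add_mem (I.mul_mem_left _ h) hj
  · intro hf
    have : icE f ∈ I.map icE := (ic_mem_map _ _).2 ⟨f, hf, rfl⟩
    rw [h2, Ideal.mem_span_singleton'] at this
    obtain ⟨a, ha⟩ := this
    obtain ⟨k, hk⟩ := icE_zero (f := f - C a * (C d + X * g)) (by
      rw [map_sub, map_mul, icE_gen, ← ha]; simp [icE])
    refine ⟨C a, k, ?_, by rw [← hk]; ring⟩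
    rw [← h1, mem_icColon, ← hk]
    exact I.sub_mem hf (I.mul_mem_left _ h)

/-- parametrization of the fibre -/
noncomputable def icFibEquiv (J : Ideal ℤ[X]) (d : ℤ) (hd : d ≠ 0) :
    {g : ℤ[X] ⧸ J // Ideal.Quotient.mk J X * g = Ideal.Quotient.mk J (C (-d))} ≃ icFib J d := by
  have key : ∀ g : {g : ℤ[X] ⧸ J // Ideal.Quotient.mk J X * g = Ideal.Quotient.mk J (C (-d))},
      C d + X * (Quotient.out g.1) ∈ J := by
    rintro ⟨g, hg⟩
    have e : Ideal.Quotient.mk J (Quotient.out g) = g := Quotient.out_eq g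
    rw [← Ideal.Quotient.eq_zero_iff_mem, map_add, map_mul, e, hg, ← map_add, ← map_add]
    simp
  refine Equiv.ofBijective (fun g => ⟨icI J d (Quotient.out g.1), icI_mem J d hd _ (key g)⟩) ⟨?_, ?_⟩
  · intro g g' h
    have h' : icI J d (Quotient.out g.1) = icI J d (Quotient.out g'.1) := congrArg Subtype.val h
    have hm : ∀ g, C d + X * g ∈ icI J d g := fun g =>
      (mem_icI _ _ _ _).2 ⟨1, 0, J.zero_mem, by ring⟩
    have h1 := hm (Quotient.out g.1)
    have h2 := hm (Quotient.out g'.1)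
    rw [← h'] at h2
    have h3 := Ideal.sub_mem _ h1 h2
    rw [add_sub_add_left_eq_sub, ← mul_sub, ← mem_icColon, (icI_mem J d hd _ (key g)).1,
      ← Ideal.Quotient.eq] at h3
    apply Subtype.ext
    rw [← Quotient.out_eq g.1, ← Quotient.out_eq g'.1]
    exact h3
  · rintro ⟨I, hI⟩
    have : d ∈ I.map icE := by rw [hI.2]; exact Ideal.mem_span_singleton_self d
    obtain ⟨f, hf, e⟩ := (ic_mem_map _ _).1 this
    obtain ⟨g, hg⟩ := icE_zero (f := f - C d) (by rw [map_sub, e]; simp [icE])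
    have hf' : f = C d + X * g := by rw [← hg]; ring
    subst hf'
    have hJ : C d + X * g ∈ J := by
      rw [← hI.1, mem_icColon]; exact I.mul_mem_left _ hf
    refine ⟨⟨Ideal.Quotient.mk J g, ?_⟩, ?_⟩
    · rw [← map_mul, Ideal.Quotient.eq]
      have : X * g - C (-d) = C d + X * g := by rw [map_neg]; ring
      rwa [this]
    · apply Subtype.ext
      apply icI_eq _ _ _ _ hI
      have e : Ideal.Quotient.mk J (Quotient.out (Ideal.Quotient.mk J g)) = Ideal.Quotient.mk J g :=
        Quotient.out_eq _
      rw [Ideal.Quotient.eq] at e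
      have e := (mem_icColon I _).1 (hI.1.symm ▸ e :
        Quotient.out (Ideal.Quotient.mk J g) - g ∈ icColon I)
      have := I.add_mem hf e
      convert this using 1
      ring

theorem ic_fib_card (J : Ideal ℤ[X]) (hJ : Nat.card (ℤ[X] ⧸ J) ≠ 0) (d c : ℕ) (hd : d ≠ 0)
    (hc : J.map icE = Ideal.span {(c : ℤ)}) (hcd : c ∣ d) :
    Nat.card (icFib J d) = c := by
  rw [← Nat.card_congr (icFibEquiv J d (by exact_mod_cast hd)), ← ic_ker_card J hJ c hc]
  have : (d : ℤ) ∈ J.map icE := by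
    rw [hc, Ideal.mem_span_singleton]; exact_mod_cast hcd
  obtain ⟨f, hf, e⟩ := (ic_mem_map _ _).1 this
  obtain ⟨g, hg⟩ := icE_zero (f := f - C (d : ℤ)) (by rw [map_sub, e]; simp [icE])
  have hX : Ideal.Quotient.mk J X * Ideal.Quotient.mk J g = Ideal.Quotient.mk J (C (-(d : ℤ))) := by
    rw [← map_mul, Ideal.Quotient.eq, ← hg, map_neg]
    convert hf using 1
    ring
  refine Nat.card_congr (Equiv.subtypeEquiv (Equiv.subRight (Ideal.Quotient.mk J g)) ?_)
  intro a
  rw [AddMonoidHom.mem_ker]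
  change _ ↔ Ideal.Quotient.mk J X * (a - Ideal.Quotient.mk J g) = 0
  rw [mul_sub, hX, sub_eq_zero]

/-- ideals with given invariants -/
def icS (p n m b : ℕ) : Set (Ideal ℤ[X]) :=
  {I | X ^ n ∈ I ∧ Nat.card (ℤ[X] ⧸ I) = p ^ m ∧ I.map icE = Ideal.span {((p ^ b : ℕ) : ℤ)}}

theorem ic_span_inj {p : ℕ} (hp : p.Prime) {b c : ℕ}
    (h : Ideal.span {((p ^ b : ℕ) : ℤ)} = Ideal.span {((p ^ c : ℕ) : ℤ)}) : b = c := by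
  have := congrArg (fun I : Ideal ℤ => Nat.card (ℤ ⧸ I)) h
  simp only [ic_card_int] at this
  exact Nat.pow_right_injective hp.two_le this

theorem ic_exists_nat (I : Ideal ℤ) : ∃ d : ℕ, I = Ideal.span {(d : ℤ)} := by
  obtain ⟨a, rfl⟩ := (IsPrincipalIdealRing.principal I).principal
  exact ⟨a.natAbs, (Int.span_natAbs a).symm⟩

theorem icS_succ {p : ℕ} (hp : p.Prime) (n m b : ℕ) (hb : b ≤ m) :
    Nonempty ((Σ c : Fin (b + 1), Σ J : icS p n (m - b) c, icFib J.1 ((p ^ b : ℕ) : ℤ)) ≃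
      icS p (n + 1) m b) := by
  refine ⟨Equiv.ofBijective (fun x => ⟨x.2.2.1, ?_, ?_, x.2.2.2.2⟩) ⟨?_, ?_⟩⟩
  · have h1 := x.2.2.2.1
    have h2 := x.2.1.2.1
    rw [← h1, mem_icColon] at h2
    rwa [pow_succ']
  · rw [ic_card, x.2.2.2.1, x.2.2.2.2, x.2.1.2.2.1, ic_card_int, ← pow_add, Nat.sub_add_cancel hb]
  · rintro ⟨c, ⟨J, hJ⟩, ⟨I, hI⟩⟩ ⟨c', ⟨J', hJ'⟩, ⟨I', hI'⟩⟩ h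
    have h : I = I' := congrArg Subtype.val h
    subst h
    have h2 : J = J' := hI.1.symm.trans hI'.1
    subst h2
    have h3 : c = c' := Fin.ext (ic_span_inj hp (hJ.2.2.symm.trans hJ'.2.2))
    subst h3
    rfl
  · rintro ⟨I, h1, h2, h3⟩
    obtain ⟨d, hd⟩ := ic_exists_nat ((icColon I).map icE)
    have hle : I ≤ icColon I := fun f hf => I.mul_mem_left _ hf
    have hm : ((p ^ b : ℕ) : ℤ) ∈ (icColon I).map icE :=
      Ideal.map_mono hle (by rw [h3]; exact Ideal.mem_span_singleton_self _)
    rw [hd, Ideal.mem_span_singleton, Int.natCast_dvd_natCast, Nat.dvd_prime_pow hp] at hm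
    obtain ⟨c, hc, rfl⟩ := hm
    refine ⟨⟨⟨c, Nat.lt_succ_of_le hc⟩, ⟨icColon I, ?_, ?_, hd⟩, ⟨I, rfl, h3⟩⟩, rfl⟩
    · rw [mem_icColon, ← pow_succ']; exact h1
    · rw [ic_card, h3, ic_card_int] at h2
      apply Nat.eq_of_mul_eq_mul_right (pow_pos hp.pos b)
      rw [h2, ← pow_add, Nat.sub_add_cancel hb]

theorem icS_le {p : ℕ} (hp : p.Prime) (n m b : ℕ) (I : Ideal ℤ[X]) (h : I ∈ icS p n m b) :
    b ≤ m := by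
  have h2 := h.2.1
  rw [ic_card, h.2.2, ic_card_int] at h2
  exact (Nat.pow_dvd_pow_iff_le_right hp.one_lt).1 (Dvd.intro_left _ h2)

/-- number of monotone tuples -/
def icM : ℕ → ℕ → ℕ → ℕ
  | 0, m, _ => if m = 0 then 1 else 0
  | n + 1, m, B => ∑ b ∈ Finset.range (B + 1), if b ≤ m then icM n (m - b) b else 0

theorem icS_zero {p : ℕ} (hp : p.Prime) (m b : ℕ) :
    icS p 0 m b = if m = 0 ∧ b = 0 then {⊤} else ∅ := by
  ext I
  constructor
  · rintro ⟨h1, h2, h3⟩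
    rw [pow_zero, ← Ideal.eq_top_iff_one] at h1
    subst h1
    have hb : b = 0 := by
      apply ic_span_inj hp
      rw [← h3, Ideal.map_top]; simp
    have hm : m = 0 := by
      have : Nat.card (ℤ[X] ⧸ (⊤ : Ideal ℤ[X])) = 1 := by
        rw [ic_quot_index]; simp
      rw [this] at h2
      exact (Nat.pow_right_injective hp.two_le (by simpa using h2)).symm
    simp [hb, hm]
  · split_ifs with h
    · rintro rfl
      obtain ⟨rfl, rfl⟩ := h
      refine ⟨trivial, ?_, ?_⟩
      · rw [ic_quot_index]; simp
      · rw [Ideal.map_top]; simp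
    · simp

theorem icS_step {p : ℕ} (hp : p.Prime) (n m b : ℕ) (hfin : ∀ m b, Finite (icS p n m b)) :
    Finite (icS p (n + 1) m b) ∧ Nat.card (icS p (n + 1) m b) =
      if b ≤ m then ∑ c ∈ Finset.range (b + 1), p ^ c * Nat.card (icS p n (m - b) c) else 0 := by
  split_ifs with hb
  · obtain ⟨e⟩ := icS_succ hp n m b hb
    have hcard : ∀ (c : Fin (b + 1)) (J : icS p n (m - b) c),
        Nat.card (icFib J.1 ((p ^ b : ℕ) : ℤ)) = p ^ (c : ℕ) := by
      intro c J
      apply ic_fib_card _ _ _ _ (pow_pos hp.pos _).ne' J.2.2.2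
        (pow_dvd_pow _ (Nat.le_of_lt_succ c.2))
      rw [J.2.2.1]
      exact (pow_pos hp.pos _).ne'
    have hf : ∀ (c : Fin (b + 1)) (J : icS p n (m - b) c),
        Finite (icFib J.1 ((p ^ b : ℕ) : ℤ)) := by
      intro c J
      apply Nat.finite_of_card_ne_zero
      rw [hcard]
      exact (pow_pos hp.pos _).ne'
    refine ⟨Finite.of_equiv _ e, ?_⟩
    rw [← Nat.card_congr e, Nat.card_sigma, Finset.sum_range]
    refine Finset.sum_congr rfl fun c _ => ?_
    have := Fintype.ofFinite (icS p n (m - b) c)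
    rw [Nat.card_sigma]
    simp only [hcard]
    rw [Finset.sum_const, smul_eq_mul, Nat.card_eq_fintype_card, mul_comm]
    rfl
  · have : icS p (n + 1) m b = ∅ := by
      ext I
      exact ⟨fun h => hb (icS_le hp _ _ _ _ h), fun h => h.elim⟩
    rw [this]
    exact ⟨inferInstance, by simp⟩

theorem icS_fin {p : ℕ} (hp : p.Prime) (n m b : ℕ) : Finite (icS p n m b) := by
  induction n generalizing m b with
  | zero => rw [icS_zero hp]; split_ifs <;> infer_instance
  | succ n ih => exact (icS_step hp n m b ih).1

theorem icS_sum {p : ℕ} (hp : p.Prime) (n m B : ℕ) :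
    ∑ c ∈ Finset.range (B + 1), p ^ c * Nat.card (icS p n m c) = p ^ m * icM n m B := by
  induction n generalizing m B with
  | zero =>
    rw [Finset.sum_range_succ', Finset.sum_eq_zero]
    · rw [icS_zero hp]
      by_cases h : m = 0 <;> simp [h, icM]
    · intro c _
      rw [icS_zero hp]; simp
  | succ n ih =>
    rw [icM, Finset.mul_sum]
    refine Finset.sum_congr rfl fun b _ => ?_
    rw [(icS_step hp n m b (icS_fin hp n)).2]
    split_ifs with h
    · rw [ih, ← mul_assoc, ← pow_add, Nat.add_sub_cancel' h]
    · simp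

theorem icS_card {p : ℕ} (hp : p.Prime) (n m b : ℕ) (h : b ≤ m) :
    Nat.card (icS p (n + 1) m b) = p ^ (m - b) * icM n (m - b) b := by
  rw [(icS_step hp n m b (icS_fin hp n)).2, if_pos h, icS_sum hp]

theorem ic_card_comap {R S : Type} [CommRing R] [CommRing S] (π : R →+* S)
    (hπ : Function.Surjective π) (I : Ideal S) :
    Nat.card (R ⧸ I.comap π) = Nat.card (S ⧸ I) :=
  AddSubgroup.index_comap_of_surjective (Submodule.toAddSubgroup I) (f := (π : R →+ S)) hπ

theorem ic_total {p : ℕ} (hp : p.Prime) (n l : ℕ) :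
    idealCount (ℤ[X] ⧸ Ideal.span {(X : ℤ[X]) ^ (n + 1)}) (p ^ l) =
      ∑ b ∈ Finset.range (l + 1), p ^ (l - b) * icM n (l - b) b := by
  set π := Ideal.Quotient.mk (Ideal.span {(X : ℤ[X]) ^ (n + 1)})
  have hπ : Function.Surjective π := Ideal.Quotient.mk_surjective
  unfold idealCount
  rw [← Set.ncard_image_of_injective _ (Ideal.comap_injective_of_surjective π hπ)]
  have himg : (Ideal.comap π '' {I | Nat.card (_ ⧸ I) = p ^ l}) =
      ⋃ b : Fin (l + 1), icS p (n + 1) l b := by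
    have hcard : ∀ I : Ideal (ℤ[X] ⧸ Ideal.span {(X : ℤ[X]) ^ (n + 1)}),
        Nat.card (ℤ[X] ⧸ I.comap π) = Nat.card (_ ⧸ I) := fun I =>
      ic_card_comap π hπ I
    ext I
    rw [Set.mem_iUnion]
    constructor
    · rintro ⟨I, hI, rfl⟩
      have hI' : Nat.card (ℤ[X] ⧸ I.comap π) = p ^ l := (hcard I).trans hI
      obtain ⟨d, hd⟩ := ic_exists_nat ((I.comap π).map icE)
      have h2 := hI'
      rw [ic_card, hd, ic_card_int] at h2
      obtain ⟨b, hb, rfl⟩ := (Nat.dvd_prime_pow hp).1 (Dvd.intro_left _ h2)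
      refine ⟨⟨b, Nat.lt_succ_of_le hb⟩, ?_, hI', hd⟩
      rw [Ideal.mem_comap]
      have : π (X ^ (n + 1)) = 0 :=
        Ideal.Quotient.eq_zero_iff_mem.2 (Ideal.mem_span_singleton_self _)
      rw [this]
      exact I.zero_mem
    · rintro ⟨b, h1, h2, h3⟩
      have e : (I.map π).comap π = I := by
        rw [Ideal.comap_map_of_surjective π hπ, sup_eq_left]
        intro f hf
        have hf : π f = 0 := hf
        rw [Ideal.Quotient.eq_zero_iff_mem, Ideal.mem_span_singleton] at hf
        exact I.mem_of_dvd hf h1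
      refine ⟨I.map π, ?_, e⟩
      change Nat.card _ = _
      rw [← hcard, e, h2]
  rw [himg, ← Nat.card_coe_set_eq]
  have : ∀ b : Fin (l + 1), Finite (icS p (n + 1) l b) := fun b => icS_fin hp _ _ _
  rw [Nat.card_congr (Set.unionEqSigmaOfDisjoint ?_), Nat.card_sigma, Finset.sum_range]
  · exact Finset.sum_congr rfl fun b _ => icS_card hp n l b (Nat.le_of_lt_succ b.2)
  · intro b c hbc
    refine Set.disjoint_left.2 fun I h1 h2 => hbc (Fin.ext (ic_span_inj hp (h1.2.2.symm.trans h2.2.2)))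

/-- the tuples -/
def icT (n m B : ℕ) : Finset (Fin n → ℕ) :=
  (Finset.Icc (fun _ => 0) (fun _ => m) : Finset (Fin n → ℕ)).filter
    (fun b => (∀ i j : Fin n, i ≤ j → b i ≤ b j) ∧ ∑ i, b i = m ∧ ∀ i, b i ≤ B)

theorem mem_icT (n m B : ℕ) (b : Fin n → ℕ) : b ∈ icT n m B ↔
    ((∀ i j : Fin n, i ≤ j → b i ≤ b j) ∧ ∑ i, b i = m ∧ ∀ i, b i ≤ B) := by
  unfold icT
  rw [Finset.mem_filter, Finset.mem_Icc]
  refine ⟨fun h => h.2, fun h => ⟨⟨fun i => Nat.zero_le _, fun i => ?_⟩, h⟩⟩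
  rw [← h.2.1]
  exact Finset.single_le_sum (f := b) (fun _ _ => Nat.zero_le _) (Finset.mem_univ i)

theorem icT_fiber (n m B c : ℕ) (hc : c ≤ B) (hm : c ≤ m) :
    ((icT (n + 1) m B).filter (fun b => b (Fin.last n) = c)).card = (icT n (m - c) c).card := by
  refine Finset.card_bij' (fun b _ => fun i => b i.castSucc)
    (fun b _ => Fin.snoc (α := fun _ => ℕ) b c) ?_ ?_ ?_ ?_
  · intro b hb
    rw [Finset.mem_filter, mem_icT] at hb
    obtain ⟨⟨h1, h2, h3⟩, rfl⟩ := hb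
    rw [mem_icT]
    refine ⟨fun i j hij => h1 _ _ (by simpa using hij), ?_, fun i => h1 _ _ (Fin.le_last _)⟩
    rw [Fin.sum_univ_castSucc] at h2
    omega
  · intro b hb
    rw [mem_icT] at hb
    obtain ⟨h1, h2, h3⟩ := hb
    rw [Finset.mem_filter, mem_icT]
    refine ⟨⟨?_, ?_, ?_⟩, by simp⟩
    · intro i j
      refine Fin.lastCases ?_ (fun j => ?_) j <;> refine Fin.lastCases ?_ (fun i => ?_) i
      · simp
      · intro _; simpa using h3 i
      · intro h
        exact absurd h (not_le.2 (Fin.castSucc_lt_last j))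
      · intro h
        simpa using h1 i j (by simpa using h)
    · rw [Fin.sum_univ_castSucc]
      simp [h2, hm]
    · intro i
      refine Fin.lastCases ?_ (fun i => ?_) i
      · simpa using hc
      · simpa using (h3 i).trans hc
  · intro b hb
    rw [Finset.mem_filter] at hb
    rw [← hb.2]
    exact Fin.snoc_init_self b
  · intro b _
    ext i
    simp

theorem icT_last_le {n m B : ℕ} {b : Fin (n + 1) → ℕ} (h : b ∈ icT (n + 1) m B) :
    b (Fin.last n) ≤ m := by
  rw [mem_icT] at h
  rw [← h.2.1]
  exact Finset.single_le_sum (f := b) (fun _ _ => Nat.zero_le _) (Finset.mem_univ _)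

theorem icT_card (n m B : ℕ) : (icT n m B).card = icM n m B := by
  induction n generalizing m B with
  | zero =>
    rw [icM]
    split_ifs with h
    · rw [Finset.card_eq_one]
      refine ⟨Fin.elim0, ?_⟩
      ext b
      rw [mem_icT]
      simp [h, Subsingleton.elim b Fin.elim0]
    · rw [Finset.card_eq_zero]
      ext b
      rw [mem_icT]
      simp [Ne.symm h]
  | succ n ih =>
    rw [icM, Finset.card_eq_sum_card_fiberwise (f := fun b => b (Fin.last n))
      (t := Finset.range (B + 1))]
    · refine Finset.sum_congr rfl fun c hc => ?_
      split_ifs with h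
      · rw [icT_fiber n m B c (Nat.le_of_lt_succ (Finset.mem_range.1 hc)) h, ih]
      · rw [Finset.card_eq_zero, Finset.filter_eq_empty_iff]
        rintro b hb rfl
        exact h (icT_last_le hb)
    · intro b hb
      have := ((mem_icT _ _ _ _).1 hb).2.2 (Fin.last n)
      simpa [Nat.lt_succ_iff] using this

/-- The number of ideals of `ℤ[X]/(X^n)` of index `p^l` equals the sum, over all
nondecreasing tuples `b_1 ≤ ⋯ ≤ b_n` of non-negative integers with `b_1 + ⋯ + b_n = l`,
of `p^{b_1 + ⋯ + b_{n-1}}`. -/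
theorem ideal_count_prime_power_int_poly_quot_pow (p : ℕ) (hp : p.Prime)
    (n : ℕ) (hn : 0 < n) (l : ℕ) :
    idealCount (Polynomial ℤ ⧸ Ideal.span {(Polynomial.X : Polynomial ℤ) ^ n}) (p ^ l) =
      ∑ b ∈ (Finset.Icc (fun _ => 0) (fun _ => l) : Finset (Fin n → ℕ)).filter
          (fun b => (∀ i j : Fin n, i ≤ j → b i ≤ b j) ∧ ∑ i, b i = l),
        p ^ (∑ i ∈ Finset.univ.erase (⟨n - 1, Nat.sub_lt hn Nat.one_pos⟩ : Fin n), b i) := by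
  obtain ⟨n, rfl⟩ := Nat.exists_eq_succ_of_ne_zero hn.ne'
  have hT : (Finset.Icc (fun _ => 0) (fun _ => l) : Finset (Fin (n + 1) → ℕ)).filter
          (fun b => (∀ i j : Fin (n + 1), i ≤ j → b i ≤ b j) ∧ ∑ i, b i = l) = icT (n + 1) l l := by
    ext b
    rw [Finset.mem_filter, icT, Finset.mem_filter, Finset.mem_Icc]
    exact ⟨fun h => ⟨h.1, h.2.1, h.2.2, h.1.2⟩, fun h => ⟨h.1, h.2.1, h.2.2.1⟩⟩
  have hl : (⟨n + 1 - 1, Nat.sub_lt hn Nat.one_pos⟩ : Fin (n + 1)) = Fin.last n := rfl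
  refine (ic_total hp n l).trans ?_
  refine Eq.trans ?_ (Finset.sum_congr hT.symm fun _ _ => rfl)
  rw [← Finset.sum_fiberwise_of_maps_to (s := icT (n + 1) l l) (t := Finset.range (l + 1))
    (g := fun b => b (Fin.last n))]
  · refine Finset.sum_congr rfl fun c hc => ?_
    have hc' := Nat.le_of_lt_succ (Finset.mem_range.1 hc)
    rw [← icT_card, ← icT_fiber n l l c hc' hc', mul_comm, ← smul_eq_mul, ← Finset.sum_const]
    refine Finset.sum_congr rfl fun b hb => ?_
    rw [Finset.mem_filter, mem_icT] at hb
    obtain ⟨⟨_, h2, _⟩, rfl⟩ := hb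
    congr 1
    have := Finset.add_sum_erase Finset.univ b (Finset.mem_univ (Fin.last n))
    rw [h2] at this
    change _ = ∑ i ∈ Finset.univ.erase (Fin.last n), b i
    omega
  · intro b hb
    exact Finset.mem_range.2 (Nat.lt_succ_of_le (icT_last_le hb))
end

section
/- Let n be a positive integer and let R = ℤ[X]/(X^n). Then the Dirichlet series Z(s) = Σ_{k≥1} a_R(k) k^{−s} converges for Re(s) > 1, and there exist δ > 0 and a function g holomorphic on {s ∈ ℂ : Re(s) > 1 − δ} with g(1) ≠ 0 such that Z(s) = g(s)·(s−1)^{−n} for all s with Re(s) > 1; that is, Z has a pole of order n at s = 1. -/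
open Polynomial

namespace IZ

/-- index of an ideal -/
noncomputable def nrm (I : Ideal ℤ[X]) : ℕ := I.toAddSubgroup.index

/-- constant coefficient as an additive map -/
noncomputable def ev : ℤ[X] →+ ℤ := (constantCoeff : ℤ[X] →+* ℤ).toAddMonoidHom

lemma ev_apply (f : ℤ[X]) : ev f = f.coeff 0 := rfl

noncomputable def cst (I : Ideal ℤ[X]) : ℕ := (I.toAddSubgroup.map ev).index

noncomputable def colX (I : Ideal ℤ[X]) : Ideal ℤ[X] :=
  Submodule.comap (LinearMap.mulLeft ℤ[X] X) I

lemma mem_colX {I : Ideal ℤ[X]} {f : ℤ[X]} : f ∈ colX I ↔ X * f ∈ I := Iff.rfl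

lemma le_colX (I : Ideal ℤ[X]) : I ≤ colX I := fun _ hf => I.mul_mem_left _ hf

lemma divX_X_mul' (q : ℤ[X]) : divX (X * q) = q := by
  ext n; simp [coeff_divX]

lemma eq_divX (f : ℤ[X]) : f = C (f.coeff 0) + X * divX f := by
  conv_lhs => rw [← divX_mul_X_add f]
  ring

lemma ev_range : ev.range = ⊤ := by
  rw [AddMonoidHom.range_eq_top]
  intro a; exact ⟨C a, by simp [ev_apply]⟩

noncomputable def mulX : ℤ[X] →+ ℤ[X] := AddMonoidHom.mulLeft X

lemma ev_ker : ev.ker = mulX.range := by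
  ext f
  rw [AddMonoidHom.mem_ker, AddMonoidHom.mem_range, ev_apply]
  constructor
  · intro h
    refine ⟨divX f, ?_⟩
    conv_rhs => rw [eq_divX f, h]
    simp [mulX]
  · rintro ⟨g, rfl⟩
    simp [mulX]

lemma nrm_eq (I : Ideal ℤ[X]) : nrm I = nrm (colX I) * cst I := by
  unfold nrm cst
  rw [AddSubgroup.index_map, ev_range, AddSubgroup.index_top, mul_one, ev_ker]
  have h : (colX I).toAddSubgroup = I.toAddSubgroup.comap mulX := rfl
  rw [h, AddSubgroup.index_comap, ← AddSubgroup.relIndex_sup_left, AddSubgroup.relIndex_mul_index]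
  exact le_sup_left

lemma mem_map_iff (I : Ideal ℤ[X]) (a : ℤ) : a ∈ I.toAddSubgroup.map ev ↔ (cst I : ℤ) ∣ a := by
  obtain ⟨b, hb⟩ := Int.subgroup_cyclic (I.toAddSubgroup.map ev)
  rw [← AddSubgroup.zmultiples_eq_closure] at hb
  unfold cst
  rw [hb, Int.index_zmultiples, Int.mem_zmultiples_iff, Int.natAbs_dvd]

lemma dvd_coeff {I : Ideal ℤ[X]} {f : ℤ[X]} (hf : f ∈ I) : (cst I : ℤ) ∣ f.coeff 0 :=
  (mem_map_iff I _).1 ⟨f, hf, rfl⟩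

lemma exists_coeff (I : Ideal ℤ[X]) {a : ℤ} (h : (cst I : ℤ) ∣ a) : ∃ f ∈ I, f.coeff 0 = a := by
  obtain ⟨f, hf, h⟩ := (mem_map_iff I _).2 h
  exact ⟨f, hf, h⟩

/-- kernel of multiplication by `X` on the quotient -/
noncomputable def kerX (J : Ideal ℤ[X]) : AddSubgroup (ℤ[X] ⧸ J) :=
  (colX J).toAddSubgroup.map (Ideal.Quotient.mk J).toAddMonoidHom

lemma mem_kerX {J : Ideal ℤ[X]} {z : ℤ[X] ⧸ J} :
    z ∈ kerX J ↔ Ideal.Quotient.mk J X * z = 0 := by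
  constructor
  · rintro ⟨f, hf, rfl⟩
    have : X * f ∈ J := hf
    simpa using Ideal.Quotient.eq_zero_iff_mem.2 this
  · obtain ⟨f, rfl⟩ := Ideal.Quotient.mk_surjective z
    intro h
    rw [← map_mul, Ideal.Quotient.eq_zero_iff_mem] at h
    exact ⟨f, h, rfl⟩

lemma card_kerX (J : Ideal ℤ[X]) (hJ : nrm J ≠ 0) : Nat.card (kerX J) = cst J := by
  have hk : (Ideal.Quotient.mk J).toAddMonoidHom.ker = J.toAddSubgroup := by
    ext f
    exact Ideal.Quotient.eq_zero_iff_mem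
  unfold kerX
  rw [← AddSubgroup.relIndex_ker, hk]
  have h1 : J.toAddSubgroup ≤ (colX J).toAddSubgroup := le_colX J
  have h2 := AddSubgroup.relIndex_mul_index h1
  have h3 := nrm_eq J
  have h4 : nrm (colX J) ≠ 0 := fun h => hJ (by rw [h3, h, zero_mul])
  have h5 : J.toAddSubgroup.relIndex (colX J).toAddSubgroup * nrm (colX J) = cst J * nrm (colX J) := by
    rw [mul_comm (cst J), ← h3]; exact h2
  exact Nat.eq_of_mul_eq_mul_right (Nat.pos_of_ne_zero h4) h5

lemma lift_aux {J : Ideal ℤ[X]} {a : ℤ} {y : ℤ[X] ⧸ J}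
    (h : (a : ℤ[X] ⧸ J) + Ideal.Quotient.mk J X * y = 0) {f : ℤ[X]} {k : ℤ}
    (h0 : f.coeff 0 = k * a) (h1 : Ideal.Quotient.mk J (divX f) = k * y) :
    Ideal.Quotient.mk J f = 0 := by
  rw [eq_divX f, map_add, map_mul, h0, h1]
  have : Ideal.Quotient.mk J (C (k * a)) = (k : ℤ[X] ⧸ J) * a := by
    rw [show (C (k * a) : ℤ[X]) = ((k * a : ℤ) : ℤ[X]) from by simp]
    simp
  rw [this]
  linear_combination (k : ℤ[X] ⧸ J) * h

noncomputable def lift (J : Ideal ℤ[X]) (a : ℤ) (y : ℤ[X] ⧸ J)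
    (h : (a : ℤ[X] ⧸ J) + Ideal.Quotient.mk J X * y = 0) : Ideal ℤ[X] where
  carrier := {f | ∃ k : ℤ, f.coeff 0 = k * a ∧ Ideal.Quotient.mk J (divX f) = k * y}
  zero_mem' := ⟨0, by simp⟩
  add_mem' := by
    rintro f g ⟨k, hk, hk'⟩ ⟨l, hl, hl'⟩
    refine ⟨k + l, ?_, ?_⟩
    · rw [coeff_add, hk, hl]; ring
    · rw [divX_add, map_add, hk', hl']; push_cast; ring
  smul_mem' := by
    rintro p f ⟨k, hk, hk'⟩
    refine ⟨p.coeff 0 * k, ?_, ?_⟩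
    · rw [smul_eq_mul, mul_coeff_zero, hk]; ring
    · have e : p • f = C (p.coeff 0) * f + X * (divX p * f) := by
        conv_lhs => rw [eq_divX p]
        rw [smul_eq_mul]; ring
      rw [e, divX_add, divX_X_mul', divX_C_mul, map_add, map_mul, map_mul, lift_aux h hk hk', hk']
      rw [show (C (p.coeff 0) : ℤ[X]) = ((p.coeff 0 : ℤ) : ℤ[X]) from by simp]
      push_cast
      simp [mul_assoc]

lemma mem_lift {J : Ideal ℤ[X]} {a : ℤ} {y : ℤ[X] ⧸ J}
    {h : (a : ℤ[X] ⧸ J) + Ideal.Quotient.mk J X * y = 0} {f : ℤ[X]} :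
    f ∈ lift J a y h ↔ ∃ k : ℤ, f.coeff 0 = k * a ∧ Ideal.Quotient.mk J (divX f) = k * y := Iff.rfl

lemma colX_lift {J : Ideal ℤ[X]} {a : ℤ} (ha : a ≠ 0) {y : ℤ[X] ⧸ J}
    (h : (a : ℤ[X] ⧸ J) + Ideal.Quotient.mk J X * y = 0) : colX (lift J a y h) = J := by
  ext f
  rw [mem_colX, mem_lift, divX_X_mul']
  constructor
  · rintro ⟨k, hk, hk'⟩
    have : k = 0 := by simpa [ha] using hk.symm
    rw [this] at hk'
    exact Ideal.Quotient.eq_zero_iff_mem.1 (by simpa using hk')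
  · intro hf
    exact ⟨0, by simp, by simpa using Ideal.Quotient.eq_zero_iff_mem.2 hf⟩

lemma mk_mem_lift {J : Ideal ℤ[X]} {a : ℤ} {y : ℤ[X] ⧸ J}
    (h : (a : ℤ[X] ⧸ J) + Ideal.Quotient.mk J X * y = 0) (g : ℤ[X])
    (hg : Ideal.Quotient.mk J g = y) : C a + X * g ∈ lift J a y h :=
  ⟨1, by simp, by rw [divX_add, divX_X_mul', divX_C]; simp [hg]⟩

lemma cst_lift {J : Ideal ℤ[X]} {a : ℕ} {y : ℤ[X] ⧸ J}
    (h : ((a : ℤ) : ℤ[X] ⧸ J) + Ideal.Quotient.mk J X * y = 0) : cst (lift J a y h) = a := by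
  apply Nat.dvd_antisymm
  · obtain ⟨g, hg⟩ := Ideal.Quotient.mk_surjective y
    have := dvd_coeff (mk_mem_lift h g hg)
    simpa [Int.natCast_dvd_natCast] using this
  · obtain ⟨f, ⟨k, hk, -⟩, hf⟩ := exists_coeff (lift J a y h) (dvd_refl _)
    rw [hf] at hk
    exact Int.natCast_dvd_natCast.1 ⟨k, by rw [hk, mul_comm]⟩

lemma lift_inj {J : Ideal ℤ[X]} {a : ℕ} (ha : a ≠ 0) {y y' : ℤ[X] ⧸ J}
    (h : ((a : ℤ) : ℤ[X] ⧸ J) + Ideal.Quotient.mk J X * y = 0)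
    (h' : ((a : ℤ) : ℤ[X] ⧸ J) + Ideal.Quotient.mk J X * y' = 0)
    (e : lift J a y h = lift J a y' h') : y = y' := by
  obtain ⟨g, hg⟩ := Ideal.Quotient.mk_surjective y
  have := mk_mem_lift h g hg
  rw [e] at this
  obtain ⟨k, hk, hk'⟩ := this
  have hk1 : k = 1 := by
    have : (a : ℤ) = k * a := by simpa using hk
    have ha' : (a : ℤ) ≠ 0 := by exact_mod_cast ha
    exact (mul_right_cancel₀ ha' (by rw [one_mul]; exact this)).symm
  rw [divX_add, divX_X_mul', divX_C, hk1] at hk'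
  simpa [hg] using hk'

lemma exists_lift (I : Ideal ℤ[X]) :
    ∃ (y : ℤ[X] ⧸ colX I)
      (h : (((cst I : ℕ) : ℤ) : ℤ[X] ⧸ colX I) + Ideal.Quotient.mk (colX I) X * y = 0),
      lift (colX I) (cst I) y h = I := by
  obtain ⟨f, hf, hf0⟩ := exists_coeff I (dvd_refl _)
  have h : (((cst I : ℕ) : ℤ) : ℤ[X] ⧸ colX I) +
      Ideal.Quotient.mk (colX I) X * Ideal.Quotient.mk (colX I) (divX f) = 0 := by
    have h1 : Ideal.Quotient.mk (colX I) f = 0 := Ideal.Quotient.eq_zero_iff_mem.2 (le_colX I hf)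
    rw [eq_divX f, hf0] at h1
    simpa using h1
  refine ⟨_, h, ?_⟩
  have key : ∀ (g : ℤ[X]) (k : ℤ), g.coeff 0 = k * (cst I : ℕ) →
      (Ideal.Quotient.mk (colX I) (divX g) = k * Ideal.Quotient.mk (colX I) (divX f) ↔ g ∈ I) := by
    intro g k hg
    rw [← map_intCast (Ideal.Quotient.mk (colX I)) k, ← map_mul, Ideal.Quotient.mk_eq_mk_iff_sub_mem, mem_colX]
    have e : X * (divX g - (k : ℤ[X]) * divX f) = g - (k : ℤ[X]) * f := by
      conv_rhs => rw [eq_divX g, eq_divX f, hg, hf0]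
      rw [C_mul]
      simp only [eq_intCast]
      ring
    rw [e]
    exact (Submodule.sub_mem_iff_left I (I.mul_mem_left _ hf))
  ext g
  constructor
  · rintro ⟨k, hk, hk'⟩
    exact (key g k hk).1 hk'
  · intro hg
    obtain ⟨k, hk⟩ := dvd_coeff hg
    have hk' : g.coeff 0 = k * (cst I : ℕ) := by rw [hk, mul_comm]
    exact ⟨k, hk', (key g k hk').2 hg⟩

/-- ideals of finite index containing `X ^ n` -/
def S (n : ℕ) : Type := {I : Ideal ℤ[X] // X ^ n ∈ I ∧ nrm I ≠ 0}

lemma nrm_colX_ne {I : Ideal ℤ[X]} (h : nrm I ≠ 0) : nrm (colX I) ≠ 0 :=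
  fun h' => h (by rw [nrm_eq, h', zero_mul])

lemma cst_ne {I : Ideal ℤ[X]} (h : nrm I ≠ 0) : cst I ≠ 0 :=
  fun h' => h (by rw [nrm_eq, h', mul_zero])

noncomputable def down (n : ℕ) (I : S (n + 1)) : S n :=
  ⟨colX I.1, by rw [mem_colX, ← pow_succ']; exact I.2.1, nrm_colX_ne I.2.2⟩

lemma exists_base (J : Ideal ℤ[X]) :
    ∃ y : ℤ[X] ⧸ J, (((cst J : ℕ) : ℤ) : ℤ[X] ⧸ J) + Ideal.Quotient.mk J X * y = 0 := by
  obtain ⟨f, hf, hf0⟩ := exists_coeff J (dvd_refl _)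
  refine ⟨Ideal.Quotient.mk J (divX f), ?_⟩
  have h1 : Ideal.Quotient.mk J f = 0 := Ideal.Quotient.eq_zero_iff_mem.2 hf
  rw [eq_divX f, hf0] at h1
  simpa using h1

lemma exists_fiberEquiv (n : ℕ) (J : S n) :
    ∃ e : (ℕ+ × kerX J.1) ≃ {I : S (n + 1) // down n I = J},
      ∀ p, cst (e p).1.1 = cst J.1 * p.1 := by
  obtain ⟨y0, hy0⟩ := exists_base J.1
  have hc : cst J.1 ≠ 0 := cst_ne J.2.2
  have hy : ∀ p : ℕ+ × kerX J.1, (((cst J.1 * (p.1 : ℕ) : ℕ) : ℤ) : ℤ[X] ⧸ J.1) +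
      Ideal.Quotient.mk J.1 X * ((p.1 : ℕ) * y0 + p.2) = 0 := by
    intro p
    have h2 := mem_kerX.1 p.2.2
    push_cast at hy0 ⊢
    linear_combination ((p.1 : ℕ) : ℤ[X] ⧸ J.1) * hy0 + h2
  have ha : ∀ p : ℕ+ × kerX J.1, cst J.1 * (p.1 : ℕ) ≠ 0 := fun p => mul_ne_zero hc p.1.ne_zero
  have hcol : ∀ p : ℕ+ × kerX J.1, colX (lift J.1 _ _ (hy p)) = J.1 := fun p =>
    colX_lift (by exact_mod_cast ha p) (hy p)
  have hcst : ∀ p : ℕ+ × kerX J.1, cst (lift J.1 _ _ (hy p)) = cst J.1 * (p.1 : ℕ) := fun p =>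
    cst_lift (hy p)
  let F : ℕ+ × kerX J.1 → {I : S (n + 1) // down n I = J} := fun p =>
    ⟨⟨lift J.1 _ _ (hy p), by
      rw [pow_succ', ← mem_colX, hcol]; exact J.2.1, by
      rw [nrm_eq, hcol, hcst]; exact mul_ne_zero J.2.2 (ha p)⟩, Subtype.ext (hcol p)⟩
  have hF : Function.Bijective F := by
    constructor
    · intro p q hpq
      have e : lift J.1 _ _ (hy p) = lift J.1 _ _ (hy q) := congrArg (fun I => I.1.1) hpq
      have e1 : p.1 = q.1 := by
        have := congrArg cst e
        rw [hcst, hcst] at this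
        exact PNat.eq (Nat.eq_of_mul_eq_mul_left (Nat.pos_of_ne_zero hc) this)
      obtain ⟨m, z⟩ := p
      obtain ⟨m', z'⟩ := q
      obtain rfl : m = m' := e1
      have := lift_inj (ha (m, z)) (hy (m, z)) (hy (m, z')) e
      congr 1
      exact Subtype.ext (add_left_cancel this)
    · rintro ⟨⟨I, hI, hI'⟩, hIJ⟩
      obtain ⟨y, h, hl⟩ := exists_lift I
      have hJ : colX I = J.1 := congrArg Subtype.val hIJ
      obtain ⟨J, hJ1, hJ2⟩ := J
      subst hJ
      obtain ⟨f, hf, hf0⟩ := exists_coeff I (dvd_refl _)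
      have hd : cst (colX I) ∣ cst I := by
        have := dvd_coeff (le_colX I hf)
        rw [hf0] at this
        exact Int.natCast_dvd_natCast.1 this
      obtain ⟨m, hm⟩ := hd
      have hm0 : 0 < m := Nat.pos_of_ne_zero (by rintro rfl; exact cst_ne hI' (by simpa using hm))
      refine ⟨(⟨m, hm0⟩, ⟨y - m * y0, ?_⟩), ?_⟩
      · rw [mem_kerX]
        rw [hm] at h
        push_cast at h hy0
        linear_combination h - (m : ℤ[X] ⧸ colX I) * hy0
      · apply Subtype.ext
        apply Subtype.ext
        change lift _ _ _ (hy _) = I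
        conv_rhs => rw [← hl]
        congr 1
        · exact congrArg Nat.cast hm.symm
        · simp
  exact ⟨Equiv.ofBijective F hF, hcst⟩

lemma hasSum_constK (K : Type*) [Finite K] [Nonempty K] (A : ℂ) :
    HasSum (fun _ : K => A / (Nat.card K : ℂ)) A := by
  have hc : (Nat.card K : ℂ) ≠ 0 := Nat.cast_ne_zero.2 Nat.card_pos.ne'
  have h1 : Summable (fun _ : K => A / (Nat.card K : ℂ)) := summable_of_hasFiniteSupport (Set.toFinite _)
  have h2 := h1.hasSum
  rw [tsum_const, nsmul_eq_mul, mul_div_cancel₀ _ hc] at h2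
  exact h2

lemma s1 {K : Type*} {h : ℕ+ → ℂ} {k : K → ℂ} (hh : Summable h) (hk : Summable k) :
    Summable (fun p : ℕ+ × K => h p.1 * k p.2) := 
    summable_mul_of_summable_norm hh.norm hk.norm
lemma s2 {K : Type*} {h : ℕ+ → ℂ} {k : K → ℂ} {H A : ℂ} (hh : HasSum h H) (hk : HasSum k A) :
    HasSum (fun p : ℕ+ × K => h p.1 * k p.2) (H * A) := 
    HasSum.mul hh hk (s1 hh.summable hk.summable)
lemma s3 {K : Type*} {h : ℕ+ → ℂ} {k : K → ℂ} {H A : ℂ} (hh : HasSum h H) (hk : HasSum k A) :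
    HasSum (fun p : ℕ+ × K => k p.2 * h p.1) (A * H) := by
  have h2 := s2 hh hk
  rw [mul_comm A H]
  exact h2.congr_fun (fun p => mul_comm _ _)

lemma hasSum_prodK {K : Type*} [Finite K] [Nonempty K] (A : ℂ) {h : ℕ+ → ℂ} {H : ℂ}
    (hh : HasSum h H) : HasSum (fun p : ℕ+ × K => A / (Nat.card K : ℂ) * h p.1) (A * H) := by
  exact s3 (K := K) (k := fun _ => A / (Nat.card K : ℂ)) hh (hasSum_constK K A)

lemma hasSum_sigmaK {T : Type*} {K : T → Type*} [∀ t, Finite (K t)] [∀ t, Nonempty (K t)]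
    {g : T → ℂ} {G : ℂ} (hg : HasSum g G) {h : ℕ+ → ℂ} {H : ℂ} (hh : HasSum h H) :
    HasSum (fun x : (Σ t, ℕ+ × K t) => g x.1 / Nat.card (K x.1) * h x.2.1) (G * H) := by
  refine HasSum.sigma_of_hasSum (hg.mul_right H) (fun t => hasSum_prodK (g t) hh) ?_
  rw [← summable_norm_iff, summable_sigma_of_nonneg (fun _ => norm_nonneg _)]
  refine ⟨fun t => (hasSum_prodK (g t) hh).summable.norm, ?_⟩
  have hn : ∀ t, ∑' y : ℕ+ × K t, ‖g t / Nat.card (K t) * h y.1‖ = ‖g t‖ * ∑' m, ‖h m‖ := by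
    intro t
    have h1 : HasSum (fun m => ((‖h m‖ : ℝ) : ℂ)) ((∑' m, ‖h m‖ : ℝ) : ℂ) :=
      Complex.hasSum_ofReal.2 hh.summable.norm.hasSum
    have h2 := hasSum_prodK (K := K t) ((‖g t‖ : ℝ) : ℂ) h1
    have h3 : HasSum (fun y : ℕ+ × K t => ‖g t / Nat.card (K t) * h y.1‖)
        (‖g t‖ * ∑' m, ‖h m‖) := by
      rw [← Complex.hasSum_ofReal]
      simpa using h2
    exact h3.tsum_eq
  exact (hg.summable.norm.mul_right _).congr (fun t => (hn t).symm)

lemma hasSum_zeta {u : ℂ} (hu : 1 < u.re) :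
    HasSum (fun m : ℕ+ => (((m : ℕ) : ℂ)) ^ (-u)) (riemannZeta u) := by
  have h1 : Summable (fun m : ℕ => 1 / (((m + 1 : ℕ) : ℂ)) ^ u) :=
    (summable_nat_add_iff 1).2 (Complex.summable_one_div_nat_cpow.2 hu)
  have h2 : HasSum (fun m : ℕ => 1 / (((m + 1 : ℕ) : ℂ)) ^ u) (riemannZeta u) := by
    rw [zeta_eq_tsum_one_div_nat_add_one_cpow hu]
    simpa using h1.hasSum
  rw [← Equiv.pnatEquivNat.symm.hasSum_iff]
  refine h2.congr_fun ?_
  intro m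
  simp [Complex.cpow_neg]

noncomputable def term (s w : ℂ) (I : Ideal ℤ[X]) : ℂ := (nrm I : ℂ) ^ (-s) * (cst I : ℂ) ^ (-w)

lemma nrm_top : nrm ⊤ = 1 := AddSubgroup.index_top

lemma cst_top : cst ⊤ = 1 := by
  have h := nrm_eq ⊤
  rw [nrm_top] at h
  exact Nat.eq_one_of_mul_eq_one_left h.symm

lemma term_aux (a c m : ℕ) (hc0 : c ≠ 0) (hm0 : m ≠ 0) (s w : ℂ) :
    ((a : ℂ) * ((c : ℂ) * (m : ℂ))) ^ (-s) * ((c : ℂ) * (m : ℂ)) ^ (-w) =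
      (a : ℂ) ^ (-s) * (c : ℂ) ^ (-(s + w - 1)) / c * (m : ℂ) ^ (-(s + w)) := by
  have hc : (c : ℂ) ≠ 0 := by exact_mod_cast hc0
  have hm : (m : ℂ) ≠ 0 := by exact_mod_cast hm0
  rw [← Nat.cast_mul c m, Complex.natCast_mul_natCast_cpow, Nat.cast_mul,
    Complex.natCast_mul_natCast_cpow, Complex.natCast_mul_natCast_cpow,
    show -(s + w - 1) = -s + -w + 1 by ring, show -(s + w) = -s + -w by ring,
    Complex.cpow_add _ _ hc, Complex.cpow_add _ _ hc, Complex.cpow_add _ _ hm, Complex.cpow_one]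
  field_simp

lemma hasSum_term (n : ℕ) : ∀ s w : ℂ, 1 < s.re → 0 ≤ w.re →
    HasSum (fun I : S n => term s w I.1)
      (∏ i ∈ Finset.range n, riemannZeta (((i + 1 : ℕ) : ℂ) * (s - 1) + 1 + w)) := by
  induction n with
  | zero =>
    intro s w _ _
    have : Unique (S 0) :=
      { default := ⟨⊤, trivial, by rw [nrm_top]; exact one_ne_zero⟩
        uniq := fun I => Subtype.ext ((Ideal.eq_top_iff_one _).2 (by simpa using I.2.1)) }
    have h := hasSum_unique (fun I : S 0 => term s w I.1)
    have h2 : (default : S 0).1 = ⊤ := (Ideal.eq_top_iff_one _).2 (by simpa using (default : S 0).2.1)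
    rw [h2] at h
    simpa [term, nrm_top, cst_top] using h
  | succ n ih =>
    intro s w hs hw
    have hu : 1 < (s + w).re := by rw [Complex.add_re]; linarith
    have ihs := ih s (s + w - 1) hs (by simp; linarith)
    have hz := hasSum_zeta hu
    have hK : ∀ J : S n, Nat.card (kerX J.1) = cst J.1 := fun J => card_kerX J.1 J.2.2
    have : ∀ J : S n, Finite (kerX J.1) := fun J =>
      Nat.finite_of_card_ne_zero (by rw [hK]; exact cst_ne J.2.2)
    have key := hasSum_sigmaK (K := fun J : S n => kerX J.1) ihs hz
    choose e he using exists_fiberEquiv n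
    let E : (Σ J : S n, ℕ+ × kerX J.1) ≃ S (n + 1) :=
      (Equiv.sigmaCongrRight e).trans (Equiv.sigmaFiberEquiv (down n))
    rw [← E.hasSum_iff]
    convert key using 1
    · funext x
      obtain ⟨J, m, z⟩ := x
      have h1 : (E ⟨J, m, z⟩) = (e J (m, z)).1 := rfl
      have h2 : colX (e J (m, z)).1.1 = J.1 := congrArg Subtype.val (e J (m, z)).2
      have h3 := he J (m, z)
      simp only [Function.comp, h1, term, hK]
      rw [nrm_eq, h2, h3]
      push_cast
      exact term_aux _ _ _ (cst_ne J.2.2) m.ne_zero _ _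
    · rw [Finset.prod_range_succ']
      congr 1
      · apply Finset.prod_congr rfl
        intro i _
        congr 1
        push_cast; ring
      · congr 1
        push_cast; ring

lemma card_quot (I : Ideal ℤ[X]) : Nat.card (ℤ[X] ⧸ I) = nrm I := rfl

lemma idealCount_eq (n : ℕ) (k : ℕ+) :
    idealCount (ℤ[X] ⧸ Ideal.span {(X : ℤ[X]) ^ n}) k = Nat.card {I : S n // nrm I.1 = k} := by
  unfold idealCount
  rw [← Nat.card_coe_set_eq]
  set q := Ideal.Quotient.mk (Ideal.span {(X : ℤ[X]) ^ n}) with hq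
  have hs : Function.Surjective q := Ideal.Quotient.mk_surjective
  have hidx : ∀ I : Ideal (ℤ[X] ⧸ Ideal.span {(X : ℤ[X]) ^ n}),
      nrm (I.comap q) = Nat.card ((ℤ[X] ⧸ Ideal.span {(X : ℤ[X]) ^ n}) ⧸ I) := fun I =>
    AddSubgroup.index_comap_of_surjective I.toAddSubgroup (f := q.toAddMonoidHom) hs
  let F : {I : Ideal (ℤ[X] ⧸ Ideal.span {(X : ℤ[X]) ^ n}) |
      Nat.card ((ℤ[X] ⧸ Ideal.span {(X : ℤ[X]) ^ n}) ⧸ I) = k} → {I : S n // nrm I.1 = k} :=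
    fun I => ⟨⟨I.1.comap q, by
      rw [Ideal.mem_comap, hq, Ideal.Quotient.eq_zero_iff_mem.2 (Ideal.mem_span_singleton_self _)]
      exact I.1.zero_mem, by rw [hidx, I.2]; exact k.ne_zero⟩, by rw [hidx]; exact I.2⟩
  refine Nat.card_congr (Equiv.ofBijective F ⟨?_, ?_⟩)
  · intro I I' h
    exact Subtype.ext (Ideal.comap_injective_of_surjective q hs (congrArg (fun x => x.1.1) h))
  · rintro ⟨⟨I, hI, hI'⟩, hk⟩
    have hc : (I.map q).comap q = I := by
      rw [Ideal.comap_map_of_surjective q hs, sup_eq_left, ← RingHom.ker_eq_comap_bot, hq,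
        Ideal.mk_ker, Ideal.span_singleton_le_iff_mem]
      exact hI
    refine ⟨⟨I.map q, ?_⟩, ?_⟩
    · rw [Set.mem_ofPred_eq, ← hidx, hc]; exact hk
    · exact Subtype.ext (Subtype.ext hc)

lemma hasSum_idealCount (n : ℕ) (s : ℂ) (hs : 1 < s.re) :
    HasSum (fun k : ℕ+ =>
      (idealCount (ℤ[X] ⧸ Ideal.span {(X : ℤ[X]) ^ n}) k : ℂ) / (k : ℂ) ^ s)
      (∏ i ∈ Finset.range n, riemannZeta (((i + 1 : ℕ) : ℂ) * (s - 1) + 1)) := by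
  have h := hasSum_term n s 0 hs (by simp)
  simp only [add_zero, term, neg_zero, Complex.cpow_zero, mul_one] at h
  let ν : S n → ℕ+ := fun I => ⟨nrm I.1, Nat.pos_of_ne_zero I.2.2⟩
  rw [← (Equiv.sigmaFiberEquiv ν).hasSum_iff] at h
  refine h.sigma (fun k => ?_)
  have h1 := h.summable.sigma_factor k
  have h2 : (fun c : {I : S n // ν I = k} =>
      ((fun I : S n => (nrm I.1 : ℂ) ^ (-s)) ∘ (Equiv.sigmaFiberEquiv ν)) ⟨k, c⟩) =
      fun _ => (k : ℂ) ^ (-s) := by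
    funext c
    have : nrm c.1.1 = k := congrArg PNat.val c.2
    change (nrm c.1.1 : ℂ) ^ (-s) = _
    rw [this]
  rw [h2] at h1 ⊢
  have h3 := h1.hasSum
  rw [tsum_const] at h3
  have h4 : Nat.card {I : S n // nrm I.1 = k} = Nat.card {I : S n // ν I = k} :=
    Nat.card_congr (Equiv.subtypeEquivRight fun I => by rw [← PNat.coe_inj]; rfl)
  rw [idealCount_eq, h4, div_eq_mul_inv, ← Complex.cpow_neg, ← nsmul_eq_mul]
  exact h3

/-- `(z - 1) ζ(z)` with the singularity removed -/
noncomputable def zz : ℂ → ℂ := Function.update (fun z => (z - 1) * riemannZeta z) 1 1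

lemma zz_one : zz 1 = 1 := by simp [zz]

lemma zz_of_ne {z : ℂ} (h : z ≠ 1) : zz z = (z - 1) * riemannZeta z := by
  simp [zz, Function.update_of_ne h]

lemma zz_diff : Differentiable ℂ zz := by
  rw [← differentiableOn_univ,
    ← Complex.differentiableOn_compl_singleton_and_continuousAt_iff (c := 1) Filter.univ_mem]
  constructor
  · intro z hz
    have hz1 : z ≠ 1 := by simpa using hz
    have : DifferentiableAt ℂ (fun z => (z - 1) * riemannZeta z) z :=
      (by fun_prop : DifferentiableAt ℂ (fun z : ℂ => z - 1) z).mul (differentiableAt_riemannZeta hz1)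
    refine (this.congr_of_eventuallyEq ?_).differentiableWithinAt
    filter_upwards [isOpen_ne.mem_nhds hz1] with x hx
    exact zz_of_ne hx
  · unfold zz
    rw [continuousAt_update_same]
    exact riemannZeta_residue_one

end IZ

/-- The ideal zeta function of `ℤ[X]/(X^n)` converges for `Re s > 1` and has a pole of
order `n` at `s = 1`. -/
theorem ideal_zeta_int_poly_quot_pow_pole_order (n : ℕ) (hn : 0 < n) :
    ∃ δ > (0 : ℝ), ∃ g : ℂ → ℂ,
      DifferentiableOn ℂ g {s : ℂ | 1 - δ < s.re} ∧ g 1 ≠ 0 ∧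
      ∀ s : ℂ, 1 < s.re →
        HasSum
          (fun k : ℕ+ =>
            (idealCount (Polynomial ℤ ⧸ Ideal.span {(Polynomial.X : Polynomial ℤ) ^ n}) k : ℂ) /
              (k : ℂ) ^ s)
          (g s / (s - 1) ^ n) := by
  refine ⟨1, one_pos, fun s => ∏ i ∈ Finset.range n,
    (IZ.zz (((i + 1 : ℕ) : ℂ) * (s - 1) + 1) / ((i + 1 : ℕ) : ℂ)), ?_, ?_, ?_⟩
  · apply Differentiable.differentiableOn
    apply Differentiable.fun_finsetProd
    intro i _
    exact (IZ.zz_diff.comp (by fun_prop :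
      Differentiable ℂ (fun s : ℂ => ((i + 1 : ℕ) : ℂ) * (s - 1) + 1))).div_const _
  · rw [Finset.prod_ne_zero_iff]
    intro i _
    rw [sub_self, mul_zero, zero_add, IZ.zz_one]
    have : ((i + 1 : ℕ) : ℂ) ≠ 0 := by exact_mod_cast i.succ_ne_zero
    exact div_ne_zero one_ne_zero this
  · intro s hs
    have h := IZ.hasSum_idealCount n s hs
    have hs1 : s - 1 ≠ 0 := by
      intro h0
      have : s = 1 := sub_eq_zero.1 h0
      rw [this] at hs
      simp at hs
    convert h using 1
    rw [div_eq_iff (pow_ne_zero _ hs1)]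
    conv_rhs => rw [← Finset.card_range n, ← Finset.prod_const, Finset.card_range,
      ← Finset.prod_mul_distrib]
    apply Finset.prod_congr rfl
    intro i _
    have hi : ((i + 1 : ℕ) : ℂ) ≠ 0 := by exact_mod_cast i.succ_ne_zero
    have hne : ((i + 1 : ℕ) : ℂ) * (s - 1) + 1 ≠ 1 := by
      intro h0
      exact mul_ne_zero hi hs1 (by simpa using h0)
    rw [IZ.zz_of_ne hne, div_eq_iff hi]
    ring
end
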